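/- Fix integers m, n ≥ 1 and k with 1 ≤ k ≤ n, let x̃ ∈ ℝⁿ be k-sparse nonnegative, σ > 0 and C > 0. Let A be a random m×n matrix with i.i.d. standard normal N(0,1) entries and let v ∈ ℝᵐ be a random vector, independent of A, with i.i.d. N(0, σ²) entries. Set y = A·x̃ + v and ζ_obj(A, v) = inf { ‖y − A·x‖₂ : x ∈ ℝⁿ, ‖x‖₁ ≤ ‖x̃‖₁ }. Let g ∈ ℝᵐ, h ∈ ℝⁿ be independent standard normal vectors and assume E[ξ_up(σ, g, h, x̃, C)] ≥ 0. Then for all ε₁, ε₂, ε₃ ∈ (0,1): P( ζ_obj(A, v) ≤ (1 + ε₁)·E[ξ_up(σ, g, h, x̃, C)] + (ε₂ + ε₃)·√n ) ≥ 1 − 2·exp( −(ε₁·E[ξ_up(σ, g, h, x̃, C)])²/(2·(2·C² + σ²)) ) − exp( −ε₂²·n/(2·σ²) ) − exp( −ε₃²·n/2 ). -/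

import Mathlib

open MeasureTheory ProbabilityTheory

noncomputable def e2norm {d : ℕ} (x : Fin d → ℝ) : ℝ := Real.sqrt (∑ i, x i ^ 2)

noncomputable def l1norm {d : ℕ} (x : Fin d → ℝ) : ℝ := ∑ i, |x i|

def kSparseNonneg (n k : ℕ) (x : Fin n → ℝ) : Prop :=
  (∀ i : Fin n, (i : ℕ) < n - k → x i = 0) ∧ ∀ i, 0 ≤ x i

noncomputable def tailSum {n : ℕ} (k : ℕ) (lam x : Fin n → ℝ) : ℝ :=
  ∑ i ∈ Finset.univ.filter (fun i : Fin n => n - k ≤ (i : ℕ)), lam i * x i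

/-- Product Gaussian measure on (g, h). -/
noncomputable def muGH (m n : ℕ) : Measure ((Fin m → ℝ) × (Fin n → ℝ)) :=
  (Measure.pi fun _ : Fin m => gaussianReal 0 1).prod
    (Measure.pi fun _ : Fin n => gaussianReal 0 1)

/-- Product Gaussian measure on (A, v). -/
noncomputable def muAv (m n : ℕ) (σ : ℝ) :
    Measure ((Fin m → Fin n → ℝ) × (Fin m → ℝ)) :=
  (Measure.pi fun _ : Fin m => Measure.pi fun _ : Fin n => gaussianReal 0 1).prod
    (Measure.pi fun _ : Fin m => gaussianReal 0 (σ ^ 2).toNNReal)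

/-- ‖y − A·x‖₂ with y = A·x̃ + v, for the sample ω = (A, v). -/
noncomputable def lassoVal (m n : ℕ) (xt : Fin n → ℝ)
    (ω : (Fin m → Fin n → ℝ) × (Fin m → ℝ)) (x : Fin n → ℝ) : ℝ :=
  e2norm (fun i => ((∑ j, ω.1 i j * xt j) + ω.2 i) - ∑ j, ω.1 i j * x j)

/-- ζ_obj(A, v): the optimal value of the LASSO (1.9). -/
noncomputable def zetaObj (m n : ℕ) (xt : Fin n → ℝ)
    (ω : (Fin m → Fin n → ℝ) × (Fin m → ℝ)) : ℝ :=
  sInf {r : ℝ | ∃ x : Fin n → ℝ, l1norm x ≤ l1norm xt ∧ r = lassoVal m n xt ω x}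

/-- ξ_up(σ, g, h, x̃, C) as a function of the Gaussian pair (g, h). -/
noncomputable def xiUpFun (m n k : ℕ) (σ C : ℝ) (xt : Fin n → ℝ)
    (p : (Fin m → ℝ) × (Fin n → ℝ)) : ℝ :=
  sSup {z : ℝ | ∃ ν : ℝ, ∃ lam : Fin n → ℝ, 0 ≤ ν ∧
    (∀ i, 0 ≤ lam i ∧ lam i ≤ 2 * ν) ∧
    z = Real.sqrt (C ^ 2 + σ ^ 2) * e2norm p.1
        - C * e2norm (fun i => p.2 i + ν - lam i) - tailSum k lam xt}


/-- standard Gaussian on I → ℝ -/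
noncomputable def gam (I : Type) [Fintype I] : Measure (I → ℝ) :=
  Measure.pi fun _ : I => gaussianReal 0 1

instance gam_prob (I : Type) [Fintype I] : IsProbabilityMeasure (gam I) := by
  unfold gam; infer_instance

noncomputable def rho {I : Type} [Fintype I] (x : I → ℝ) : ℝ := ∏ i, gaussianPDFReal 0 1 (x i)

lemma rho_nonneg {I : Type} [Fintype I] (x : I → ℝ) : 0 ≤ rho x :=
  Finset.prod_nonneg fun _ _ => gaussianPDFReal_nonneg _ _ _

lemma rho_meas {I : Type} [Fintype I] : Measurable (rho : (I → ℝ) → ℝ) := by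
  unfold rho
  exact Finset.measurable_prod _ fun i _ =>
    (measurable_gaussianPDFReal 0 1).comp (measurable_pi_apply i)

lemma gam_eq (I : Type) [Fintype I] :
    gam I = (volume : Measure (I → ℝ)).withDensity (fun x => ENNReal.ofReal (rho x)) := by
  unfold gam
  refine Measure.pi_eq fun s hs => ?_
  rw [withDensity_apply _ (MeasurableSet.univ_pi hs), ← lintegral_indicator (MeasurableSet.univ_pi hs)]
  have h1 : ∀ x : I → ℝ, (Set.univ.pi s).indicator (fun x => ENNReal.ofReal (rho x)) x
      = ENNReal.ofReal (∏ i, (s i).indicator (gaussianPDFReal 0 1) (x i)) := by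
    intro x
    by_cases hx : x ∈ Set.univ.pi s
    · rw [Set.indicator_of_mem hx]
      congr 1
      unfold rho
      exact Finset.prod_congr rfl fun i _ => by rw [Set.indicator_of_mem (hx i trivial)]
    · rw [Set.indicator_of_notMem hx]
      obtain ⟨i, hi⟩ : ∃ i, x i ∉ s i := by simpa [Set.mem_pi] using hx
      rw [Finset.prod_eq_zero (Finset.mem_univ i) (Set.indicator_of_notMem hi _)]
      simp
  simp_rw [h1]
  have hint : ∀ i, Integrable ((s i).indicator (gaussianPDFReal 0 1)) volume := fun i =>
    (integrable_gaussianPDFReal 0 1).indicator (hs i)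
  have hnn : ∀ i x, 0 ≤ (s i).indicator (gaussianPDFReal 0 1) x := fun i x =>
    Set.indicator_nonneg (fun _ _ => gaussianPDFReal_nonneg _ _ _) _
  rw [← ofReal_integral_eq_lintegral_ofReal]
  · rw [integral_fintype_prod_volume_eq_prod (fun i x => (s i).indicator (gaussianPDFReal 0 1) x),
      ENNReal.ofReal_prod_of_nonneg fun i _ => integral_nonneg (hnn i)]
    refine Finset.prod_congr rfl fun i _ => ?_
    rw [gaussianReal_apply_eq_integral 0 one_ne_zero, integral_indicator (hs i)]
  · exact Integrable.fintype_prod hint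
  · exact Filter.Eventually.of_forall fun x => Finset.prod_nonneg fun i _ => hnn i _

lemma gam_integrable_iff {I : Type} [Fintype I] (f : (I → ℝ) → ℝ) :
    Integrable f (gam I) ↔ Integrable (fun x => f x * rho x) volume := by
  rw [gam_eq, integrable_withDensity_iff rho_meas.ennreal_ofReal
    (Filter.Eventually.of_forall fun x => ENNReal.ofReal_lt_top)]
  simp_rw [ENNReal.toReal_ofReal (rho_nonneg _)]

lemma gam_integral {I : Type} [Fintype I] (f : (I → ℝ) → ℝ) :
    ∫ x, f x ∂(gam I) = ∫ x, f x * rho x := by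
  rw [gam_eq, integral_withDensity_eq_integral_toReal_smul rho_meas.ennreal_ofReal
    (Filter.Eventually.of_forall fun x => ENNReal.ofReal_lt_top)]
  simp_rw [ENNReal.toReal_ofReal (rho_nonneg _), smul_eq_mul, mul_comm]

lemma rho_line {I : Type} [Fintype I] (x e : I → ℝ) :
    HasLineDerivAt ℝ rho (-(e ⬝ᵥ x) * rho x) x e := by
  unfold HasLineDerivAt
  have hf : (fun t : ℝ => rho (x + t • e)) = fun t : ℝ =>
      (∏ _i : I, (√(2 * Real.pi * 1))⁻¹) * Real.exp (∑ i, -(x i + t * e i) ^ 2 / 2) := by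
    funext t
    unfold rho
    rw [Real.exp_sum, ← Finset.prod_mul_distrib]
    refine Finset.prod_congr rfl fun i _ => ?_
    simp [gaussianPDFReal]
  rw [hf]
  have h0 : rho x = (∏ _i : I, (√(2 * Real.pi * 1))⁻¹) * Real.exp (∑ i, -(x i + 0 * e i) ^ 2 / 2) := by
    have := congrFun hf 0
    simpa using this
  have hd : HasDerivAt (fun t : ℝ => ∑ i, -(x i + t * e i) ^ 2 / 2) (∑ i, -(e i * x i)) 0 := by
    have := HasDerivAt.fun_sum (u := Finset.univ) (A := fun i (t : ℝ) => -(x i + t * e i) ^ 2 / 2)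
      (A' := fun i => -(e i * x i)) (x := 0) (fun i _ => ?_)
    · exact this
    · have := ((((hasDerivAt_id (0:ℝ)).mul_const (e i)).const_add (x i)).pow 2).neg.div_const 2
      refine HasDerivAt.congr_deriv this ?_
      simp; ring
  have := (hd.exp).const_mul (∏ _i : I, (√(2 * Real.pi * 1))⁻¹)
  refine HasDerivAt.congr_deriv this ?_
  rw [h0]
  simp only [dotProduct, Finset.sum_neg_distrib]
  ring

lemma stein {I : Type} [Fintype I] {φ φ' : (I → ℝ) → ℝ} (e : I → ℝ)
    (h : ∀ x, HasLineDerivAt ℝ φ (φ' x) x e)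
    (i1 : Integrable φ (gam I)) (i2 : Integrable φ' (gam I))
    (i3 : Integrable (fun x => φ x * (e ⬝ᵥ x)) (gam I)) :
    ∫ x, φ x * (e ⬝ᵥ x) ∂(gam I) = ∫ x, φ' x ∂(gam I) := by
  rw [gam_integral, gam_integral]
  rw [gam_integrable_iff] at i1 i2 i3
  have := integral_bilinear_hasLineDerivAt_right_eq_neg_left_of_integrable
    (μ := (volume : Measure (I → ℝ))) (f := φ) (f' := φ') (g := rho)
    (g' := fun x => -(e ⬝ᵥ x) * rho x) (v := e) (B := ContinuousLinearMap.mul ℝ ℝ)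
    (by simpa using i2) (by
      refine (i3.neg).congr (Filter.Eventually.of_forall fun x => ?_)
      simp; ring) (by simpa using i1) (fun x _ => h x) (fun x _ => rho_line x e)
  simp only [ContinuousLinearMap.mul_apply'] at this
  rw [← neg_eq_iff_eq_neg] at this
  rw [← this, ← integral_neg]
  congr 1; funext x; ring

lemma gam_int_dot {I : Type} [Fintype I] (e : I → ℝ) : Integrable (fun x => e ⬝ᵥ x) (gam I) := by
  unfold dotProduct gam
  refine integrable_finsetSum _ fun i _ => Integrable.const_mul ?_ _
  have h : Integrable (id : ℝ → ℝ) (gaussianReal 0 1) :=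
    (memLp_id_gaussianReal 1).integrable le_rfl
  exact (measurePreserving_eval (fun _ : I => gaussianReal 0 1) i).integrable_comp_of_integrable h

lemma gam_int_norm {I : Type} [Fintype I] : Integrable (fun x : I → ℝ => ‖x‖) (gam I) := by
  classical
  have h : ∀ i : I, Integrable (fun x : I → ℝ => |x i|) (gam I) := fun i => by
    simpa using (gam_int_dot (Pi.single i 1 : I → ℝ)).abs
  refine Integrable.mono' (integrable_finsetSum Finset.univ fun i _ => h i)
    continuous_norm.aestronglyMeasurable (Filter.Eventually.of_forall fun x => ?_)
  rw [norm_norm, pi_norm_le_iff_of_nonneg (Finset.sum_nonneg fun i _ => abs_nonneg _)]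
  intro i
  exact Finset.single_le_sum (f := fun i => |x i|) (fun i _ => abs_nonneg _) (Finset.mem_univ i)


/-- Euclidean norm -/
noncomputable def nrm {I : Type} [Fintype I] (x : I → ℝ) : ℝ := Real.sqrt (∑ i, x i ^ 2)

def Lip {I : Type} [Fintype I] (L : ℝ) (F : (I → ℝ) → ℝ) : Prop :=
  ∀ x y, |F x - F y| ≤ L * nrm (x - y)

section
variable {I : Type} [Fintype I]

lemma nrm_nonneg (x : I → ℝ) : 0 ≤ nrm x := Real.sqrt_nonneg _

lemma nrm_sq (x : I → ℝ) : nrm x ^ 2 = ∑ i, x i ^ 2 :=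
  Real.sq_sqrt (Finset.sum_nonneg fun _ _ => sq_nonneg _)

lemma nrm_zero : nrm (0 : I → ℝ) = 0 := by simp [nrm]

lemma nrm_eq (x : I → ℝ) : nrm x = ‖(WithLp.toLp 2 x : EuclideanSpace ℝ I)‖ := by
  rw [EuclideanSpace.norm_eq]; simp [nrm]

lemma nrm_cont : Continuous (nrm : (I → ℝ) → ℝ) := by unfold nrm; fun_prop

lemma nrm_smul (t : ℝ) (x : I → ℝ) : nrm (t • x) = |t| * nrm x := by
  rw [nrm_eq, nrm_eq, WithLp.toLp_smul, norm_smul, Real.norm_eq_abs]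

lemma nrm_add (x y : I → ℝ) : nrm (x + y) ≤ nrm x + nrm y := by
  rw [nrm_eq, nrm_eq, nrm_eq, WithLp.toLp_add]; exact norm_add_le _ _

lemma dot_le (x y : I → ℝ) : x ⬝ᵥ y ≤ nrm x * nrm y := by
  have := real_inner_le_norm (WithLp.toLp 2 x : EuclideanSpace ℝ I) (WithLp.toLp 2 y)
  rw [nrm_eq, nrm_eq]
  refine le_trans (le_of_eq ?_) this
  simp [PiLp.inner_apply, dotProduct, mul_comm]

lemma abs_dot_le (x y : I → ℝ) : |x ⬝ᵥ y| ≤ nrm x * nrm y := by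
  rw [abs_le']
  refine ⟨dot_le x y, ?_⟩
  have := dot_le ((-1 : ℝ) • x) y
  rw [nrm_smul] at this
  simpa using this

lemma nrm_le_card (x : I → ℝ) : nrm x ≤ Real.sqrt (Fintype.card I) * ‖x‖ := by
  unfold nrm
  rw [← Real.sqrt_sq (norm_nonneg x), ← Real.sqrt_mul (by positivity)]
  refine Real.sqrt_le_sqrt ?_
  calc ∑ i, x i ^ 2 ≤ ∑ _i : I, ‖x‖ ^ 2 := Finset.sum_le_sum fun i _ => by
        rw [← sq_abs]
        exact pow_le_pow_left₀ (abs_nonneg _) (norm_le_pi_norm x i) 2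
    _ = _ := by simp

lemma gam_int_nrm : Integrable (nrm : (I → ℝ) → ℝ) (gam I) := by
  refine Integrable.mono' (gam_int_norm.const_mul (Real.sqrt (Fintype.card I)))
    nrm_cont.aestronglyMeasurable (Filter.Eventually.of_forall fun x => ?_)
  rw [Real.norm_eq_abs, abs_of_nonneg (nrm_nonneg x)]
  exact nrm_le_card x

lemma Lip.cont {L : ℝ} {F : (I → ℝ) → ℝ} (h : Lip L F) : Continuous F := by
  rw [continuous_iff_continuousAt]
  intro x
  rw [ContinuousAt, tendsto_iff_dist_tendsto_zero]
  have h2 : Filter.Tendsto (fun y => L * nrm (y - x)) (nhds x) (nhds 0) := by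
    have : Continuous (fun y : I → ℝ => L * nrm (y - x)) := by
      have := nrm_cont (I := I); fun_prop
    have h3 := this.tendsto x
    simpa [nrm_zero] using h3
  exact squeeze_zero (fun _ => dist_nonneg) (fun y => by rw [Real.dist_eq]; exact h y x) h2

lemma Lip.int {L : ℝ} {F : (I → ℝ) → ℝ} (h : Lip L F) : Integrable F (gam I) := by
  refine Integrable.mono' ((gam_int_nrm.const_mul L).add (integrable_const |F 0|))
    h.cont.aestronglyMeasurable (Filter.Eventually.of_forall fun x => ?_)
  have := h x 0
  rw [sub_zero] at this
  have h2 := abs_sub_abs_le_abs_sub (F x) (F 0)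
  simp only [Real.norm_eq_abs, Pi.add_apply]
  linarith

lemma mollify {L : ℝ} {F : (I → ℝ) → ℝ} (h : Lip L F) {ε : ℝ} (hε : 0 < ε) :
    ∃ G : (I → ℝ) → ℝ, ContDiff ℝ 1 G ∧ Lip L G ∧ ∀ x, |G x - F x| ≤ ε := by
  have h2 : Filter.Tendsto (fun y : I → ℝ => L * nrm y) (nhds 0) (nhds 0) := by
    have : Continuous (fun y : I → ℝ => L * nrm y) := by
      have := nrm_cont (I := I); fun_prop
    simpa [nrm_zero] using this.tendsto 0
  obtain ⟨δ, hδ, hb⟩ := Metric.eventually_nhds_iff_ball.1 (h2.eventually_le_const hε)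
  let φ : ContDiffBump (0 : I → ℝ) := ⟨δ / 2, δ, by linarith, by linarith⟩
  have hli : LocallyIntegrable F volume := h.cont.locallyIntegrable
  refine ⟨convolution (φ.normed volume) F (ContinuousLinearMap.lsmul ℝ ℝ) volume, ?_, ?_, ?_⟩
  · exact φ.hasCompactSupport_normed.contDiff_convolution_left _ φ.contDiff_normed hli
  · intro x y
    have hi : ∀ x, Integrable (fun t => φ.normed volume t * F (x - t)) volume := by
      intro x
      have hc : Continuous (fun t => φ.normed volume t * F (x - t)) := by
        have := h.cont
        have h3 : Continuous (φ.normed (volume : Measure (I → ℝ))) := φ.continuous_normed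
        fun_prop
      exact hc.integrable_of_hasCompactSupport (φ.hasCompactSupport_normed.mul_right)
    simp only [convolution, ContinuousLinearMap.lsmul_apply, smul_eq_mul]
    rw [← integral_sub (hi x) (hi y), ← Real.norm_eq_abs]
    have h4 : ∫ t, φ.normed volume t * (L * nrm (x - y)) = L * nrm (x - y) := by
      rw [integral_mul_const, φ.integral_normed, one_mul]
    rw [← h4]
    refine norm_integral_le_of_norm_le (φ.integrable_normed.mul_const _)
      (Filter.Eventually.of_forall fun t => ?_)
    rw [← mul_sub, Real.norm_eq_abs, abs_mul, abs_of_nonneg (φ.nonneg_normed t)]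
    refine mul_le_mul_of_nonneg_left ?_ (φ.nonneg_normed t)
    have := h (x - t) (y - t)
    simpa using this
  · intro x
    rw [← Real.dist_eq]
    refine ContDiffBump.dist_normed_convolution_le h.cont.aestronglyMeasurable fun y hy => ?_
    rw [Real.dist_eq]
    refine (h y x).trans (hb _ ?_)
    rw [mem_ball_zero_iff, ← dist_eq_norm]
    exact hy

noncomputable def grd [DecidableEq I] (G : (I → ℝ) → ℝ) (x : I → ℝ) (j : I) : ℝ :=
  fderiv ℝ G x (Pi.single j 1)

lemma fderiv_eq_grd [DecidableEq I] (G : (I → ℝ) → ℝ) (x v : I → ℝ) :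
    fderiv ℝ G x v = grd G x ⬝ᵥ v := by
  conv_lhs => rw [pi_eq_sum_univ' v]
  rw [map_sum]
  simp only [dotProduct, grd]
  refine Finset.sum_congr rfl fun j _ => ?_
  rw [map_smul, smul_eq_mul, mul_comm]
  

lemma grd_nrm [DecidableEq I] {L : ℝ} (hL : 0 ≤ L) {G : (I → ℝ) → ℝ} (h : Lip L G)
    (hG : ContDiff ℝ 1 G) (x : I → ℝ) : nrm (grd G x) ≤ L := by
  have h1 : ∀ v, |fderiv ℝ G x v| ≤ L * nrm v := by
    intro v
    have hd : HasDerivAt (fun t : ℝ => G (x + t • v)) (fderiv ℝ G x v) 0 :=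
      (hG.differentiable one_ne_zero x).hasFDerivAt.hasLineDerivAt v
    refine hd.le_of_lip' (mul_nonneg hL (nrm_nonneg v)) (Filter.Eventually.of_forall fun t => ?_)
    refine (h _ _).trans (le_of_eq ?_)
    have : x + t • v - (x + (0 : ℝ) • v) = t • v := by simp
    rw [this, nrm_smul, sub_zero, Real.norm_eq_abs]; ring
  have h2 := h1 (grd G x)
  rw [fderiv_eq_grd] at h2
  have h3 : grd G x ⬝ᵥ grd G x = nrm (grd G x) ^ 2 := by
    rw [nrm_sq]; simp [dotProduct, sq]
  rw [h3, abs_of_nonneg (sq_nonneg _)] at h2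
  by_contra hlt
  push Not at hlt
  nlinarith [nrm_nonneg (grd G x)]

lemma grd_cont [DecidableEq I] {G : (I → ℝ) → ℝ} (hG : ContDiff ℝ 1 G) (j : I) :
    Continuous (fun x => grd G x j) := by
  unfold grd
  exact (hG.continuous_fderiv one_ne_zero).clm_apply continuous_const

lemma abs_grd_le [DecidableEq I] (G : (I → ℝ) → ℝ) (x : I → ℝ) (j : I) :
    |grd G x j| ≤ nrm (grd G x) := by
  rw [← Real.sqrt_sq_eq_abs]
  exact Real.sqrt_le_sqrt (Finset.single_le_sum (f := fun i => grd G x i ^ 2)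
    (fun i _ => sq_nonneg _) (Finset.mem_univ j))

end

lemma gam_sum (I K : Type) [Fintype I] [Fintype K] :
    MeasurePreserving (fun ω : I ⊕ K → ℝ => ((fun i => ω (Sum.inl i)), (fun i => ω (Sum.inr i))))
      (gam (I ⊕ K)) ((gam I).prod (gam K)) :=
  measurePreserving_sumPiEquivProdPi (X := fun _ : I ⊕ K => ℝ) (fun _ => gaussianReal 0 1)


set_option linter.unusedSectionVars false
section
variable {I : Type} [Fintype I] [DecidableEq I]

def pl (ω : I ⊕ I → ℝ) : I → ℝ := fun i => ω (Sum.inl i)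
noncomputable def xs (θ : ℝ) (ω : I ⊕ I → ℝ) : I → ℝ :=
  fun i => Real.cos θ * ω (Sum.inl i) + Real.sin θ * ω (Sum.inr i)
noncomputable def ev (θ : ℝ) (j : I) : I ⊕ I → ℝ :=
  Sum.elim (Pi.single j (-Real.sin θ)) (Pi.single j (Real.cos θ))
noncomputable def dv (θ : ℝ) (ω : I ⊕ I → ℝ) : I → ℝ := fun j => ev θ j ⬝ᵥ ω

lemma dv_eq (θ : ℝ) (ω : I ⊕ I → ℝ) (j : I) :
    dv θ ω j = -Real.sin θ * ω (Sum.inl j) + Real.cos θ * ω (Sum.inr j) := by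
  simp only [dv, ev, dotProduct, Fintype.sum_sum_type, Sum.elim_inl, Sum.elim_inr]
  simp [Pi.single_apply, ite_mul]

lemma pl_cont : Continuous (pl : (I ⊕ I → ℝ) → (I → ℝ)) := by unfold pl; fun_prop
lemma xs_cont (θ : ℝ) : Continuous (xs θ : (I ⊕ I → ℝ) → (I → ℝ)) := by unfold xs; fun_prop

lemma xs_deriv (θ : ℝ) (ω : I ⊕ I → ℝ) : HasDerivAt (fun θ => xs θ ω) (dv θ ω) θ := by
  rw [hasDerivAt_pi]
  intro i
  rw [dv_eq]
  exact ((Real.hasDerivAt_cos θ).mul_const _).add ((Real.hasDerivAt_sin θ).mul_const _)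

lemma dv_nrm (θ : ℝ) (ω : I ⊕ I → ℝ) :
    nrm (dv θ ω) ≤ Real.sqrt (Fintype.card I) * (2 * ‖ω‖) := by
  refine (nrm_le_card _).trans (mul_le_mul_of_nonneg_left ?_ (Real.sqrt_nonneg _))
  rw [pi_norm_le_iff_of_nonneg (by positivity)]
  intro i
  rw [dv_eq, Real.norm_eq_abs]
  refine (abs_add_le _ _).trans ?_
  rw [abs_mul, abs_mul, abs_neg]
  have h1 := norm_le_pi_norm ω (Sum.inl i)
  have h2 := norm_le_pi_norm ω (Sum.inr i)
  rw [Real.norm_eq_abs] at h1 h2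
  have := Real.abs_sin_le_one θ
  have := Real.abs_cos_le_one θ
  nlinarith [abs_nonneg (ω (Sum.inl i)), abs_nonneg (ω (Sum.inr i)), abs_nonneg (Real.sin θ),
    abs_nonneg (Real.cos θ)]

lemma bdd_int {J : Type} [Fintype J] {f : (J → ℝ) → ℝ} (hc : Continuous f) (B : ℝ)
    (h : ∀ x, |f x| ≤ B) : Integrable f (gam J) :=
  Integrable.mono' (integrable_const B) hc.aestronglyMeasurable (Filter.Eventually.of_forall h)

lemma bdd_mul_dot_int {J : Type} [Fintype J] {f : (J → ℝ) → ℝ} (hc : Continuous f) (B : ℝ)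
    (h : ∀ x, |f x| ≤ B) (e : J → ℝ) : Integrable (fun x => f x * (e ⬝ᵥ x)) (gam J) :=
  (gam_int_dot e).bdd_mul (c := B) hc.aestronglyMeasurable (Filter.Eventually.of_forall h)

lemma cov_deriv {F G : (I → ℝ) → ℝ} (hF : ContDiff ℝ 1 F) (hG : ContDiff ℝ 1 G)
    {B LF LG : ℝ} (hLF : 0 ≤ LF) (hLG : 0 ≤ LG) (hFB : ∀ x, |F x| ≤ B) (hGB : ∀ x, |G x| ≤ B)
    (hFL : Lip LF F) (hGL : Lip LG G) (θ : ℝ) :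
    HasDerivAt (fun θ => ∫ ω, F (pl ω) * G (xs θ ω) ∂(gam (I ⊕ I)))
      (-Real.sin θ * ∫ ω, grd F (pl ω) ⬝ᵥ grd G (xs θ ω) ∂(gam (I ⊕ I))) θ := by
  have hB : 0 ≤ B := (abs_nonneg _).trans (hFB 0)
  have cF := hF.continuous
  have cG := hG.continuous
  have cpl := pl_cont (I := I)
  have cxs := xs_cont (I := I)
  have key := hasDerivAt_integral_of_dominated_loc_of_deriv_le (μ := gam (I ⊕ I))
    (F := fun θ ω => F (pl ω) * G (xs θ ω))
    (F' := fun θ ω => F (pl ω) * (grd G (xs θ ω) ⬝ᵥ dv θ ω)) (x₀ := θ) (s := Set.univ)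
    (bound := fun ω => B * (LG * (Real.sqrt (Fintype.card I) * (2 * ‖ω‖)))) Filter.univ_mem
    (Filter.Eventually.of_forall fun θ => by
      have := cxs θ
      exact Continuous.aestronglyMeasurable (by fun_prop))
    (by
      have := cxs θ
      refine bdd_int (by fun_prop) (B * B) fun x => ?_
      rw [abs_mul]
      exact mul_le_mul (hFB _) (hGB _) (abs_nonneg _) hB)
    (by
      refine Continuous.aestronglyMeasurable ?_
      refine (cF.comp cpl).mul ?_
      unfold dotProduct
      refine continuous_finsetSum _ fun j _ => ((grd_cont hG j).comp (cxs θ)).mul ?_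
      simp only [dv_eq]
      fun_prop)
    (Filter.Eventually.of_forall fun ω θ _ => by
      rw [Real.norm_eq_abs, abs_mul]
      refine mul_le_mul (hFB _) ?_ (abs_nonneg _) hB
      refine (abs_dot_le _ _).trans (mul_le_mul (grd_nrm hLG hGL hG _) (dv_nrm θ ω)
        (nrm_nonneg _) hLG))
    ((((gam_int_norm.const_mul 2).const_mul _).const_mul _).const_mul _)
    (Filter.Eventually.of_forall fun ω θ _ => by
      refine HasDerivAt.const_mul _ ?_
      rw [← fderiv_eq_grd]
      exact ((hG.differentiable one_ne_zero _).hasFDerivAt).comp_hasDerivAt θ (xs_deriv θ ω))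
  refine key.2.congr_deriv ?_
  have hst : ∀ j, ∫ ω, (F (pl ω) * grd G (xs θ ω) j) * (ev θ j ⬝ᵥ ω) ∂(gam (I ⊕ I))
      = ∫ ω, -Real.sin θ * (grd F (pl ω) j * grd G (xs θ ω) j) ∂(gam (I ⊕ I)) := by
    intro j
    have c1 : Continuous (fun ω : I ⊕ I → ℝ => F (pl ω) * grd G (xs θ ω) j) :=
      (cF.comp cpl).mul ((grd_cont hG j).comp (cxs θ))
    have c2 : Continuous (fun ω : I ⊕ I → ℝ => -Real.sin θ * (grd F (pl ω) j * grd G (xs θ ω) j)) :=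
      continuous_const.mul (((grd_cont hF j).comp cpl).mul ((grd_cont hG j).comp (cxs θ)))
    have b1 : ∀ ω : I ⊕ I → ℝ, |F (pl ω) * grd G (xs θ ω) j| ≤ B * LG := fun ω => by
      rw [abs_mul]
      exact mul_le_mul (hFB _) ((abs_grd_le _ _ _).trans (grd_nrm hLG hGL hG _)) (abs_nonneg _) hB
    refine stein (ev θ j) (fun ω => ?_) (bdd_int c1 _ b1) (bdd_int c2 (1 * (LF * LG)) fun ω => ?_)
      (bdd_mul_dot_int c1 _ b1 _)
    · unfold HasLineDerivAt
      have h1 : ∀ t : ℝ, pl (ω + t • ev θ j) = pl ω + t • (Pi.single j (-Real.sin θ)) := fun t => by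
        funext i; simp [pl, ev]
      have h2 : ∀ t : ℝ, xs θ (ω + t • ev θ j) = xs θ ω := fun t => by
        funext i
        simp only [xs, ev, Pi.add_apply, Pi.smul_apply, Sum.elim_inl, Sum.elim_inr, smul_eq_mul]
        by_cases hij : i = j
        · subst hij; simp; ring
        · simp [hij]
      simp only [h1, h2]
      have hd : HasDerivAt (fun t : ℝ => F (pl ω + t • (Pi.single j (-Real.sin θ)))) _ 0 :=
        (hF.differentiable one_ne_zero (pl ω)).hasFDerivAt.hasLineDerivAt (Pi.single j (-Real.sin θ))
      refine (hd.mul_const (grd G (xs θ ω) j)).congr_deriv ?_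
      rw [fderiv_eq_grd]
      simp [dotProduct_single]; ring
    · rw [abs_mul, abs_mul, abs_neg]
      refine mul_le_mul (Real.abs_sin_le_one θ) ?_ (by positivity) zero_le_one
      exact mul_le_mul ((abs_grd_le _ _ _).trans (grd_nrm hLF hFL hF _))
        ((abs_grd_le _ _ _).trans (grd_nrm hLG hGL hG _)) (abs_nonneg _) hLF
  have hi1 : ∀ j, Integrable (fun ω => (F (pl ω) * grd G (xs θ ω) j) * (ev θ j ⬝ᵥ ω))
      (gam (I ⊕ I)) := fun j => by
    refine bdd_mul_dot_int ((cF.comp cpl).mul ((grd_cont hG j).comp (cxs θ))) (B * LG) (fun ω => ?_) _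
    show |F (pl ω) * grd G (xs θ ω) j| ≤ _
    rw [abs_mul]
    exact mul_le_mul (hFB _) ((abs_grd_le _ _ _).trans (grd_nrm hLG hGL hG _)) (abs_nonneg _) hB
  have hi2 : ∀ j, Integrable (fun ω : I ⊕ I → ℝ =>
      -Real.sin θ * (grd F (pl ω) j * grd G (xs θ ω) j)) (gam (I ⊕ I)) := fun j => by
    refine Integrable.const_mul (bdd_int (((grd_cont hF j).comp cpl).mul
      ((grd_cont hG j).comp (cxs θ))) (LF * LG) fun ω => ?_) _
    show |grd F (pl ω) j * grd G (xs θ ω) j| ≤ _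
    rw [abs_mul]
    exact mul_le_mul ((abs_grd_le _ _ _).trans (grd_nrm hLF hFL hF _))
        ((abs_grd_le _ _ _).trans (grd_nrm hLG hGL hG _)) (abs_nonneg _) hLF
  rw [← integral_const_mul]
  have e1 : ∀ ω, F (pl ω) * (grd G (xs θ ω) ⬝ᵥ dv θ ω)
      = ∑ j, (F (pl ω) * grd G (xs θ ω) j) * (ev θ j ⬝ᵥ ω) := fun ω => by
    simp only [dotProduct, Finset.mul_sum, dv, mul_assoc]
  have e2 : ∀ ω, -Real.sin θ * (grd F (pl ω) ⬝ᵥ grd G (xs θ ω))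
      = ∑ j, -Real.sin θ * (grd F (pl ω) j * grd G (xs θ ω) j) := fun ω => by
    simp only [dotProduct, Finset.mul_sum]
  simp only [e1, e2]
  rw [integral_finsetSum _ fun j _ => hi1 j, integral_finsetSum _ fun j _ => hi2 j]
  exact Finset.sum_congr rfl fun j _ => hst j

end


section
variable {I : Type} [Fintype I] [DecidableEq I]

lemma abs_exp_sub_le {a b M : ℝ} (ha : a ≤ M) (hb : b ≤ M) :
    |Real.exp a - Real.exp b| ≤ Real.exp M * |a - b| := by
  have key : ∀ a b : ℝ, a ≤ M → Real.exp a - Real.exp b ≤ Real.exp M * |a - b| := by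
    intro a b ha
    have h1 := Real.add_one_le_exp (b - a)
    have h2 : Real.exp b = Real.exp a * Real.exp (b - a) := by rw [← Real.exp_add]; ring_nf
    have h3 : Real.exp a - Real.exp b ≤ Real.exp a * (a - b) := by
      rw [h2]; nlinarith [Real.exp_pos a]
    refine h3.trans ?_
    refine (mul_le_mul_of_nonneg_left (le_abs_self _) (Real.exp_pos _).le).trans ?_
    exact mul_le_mul_of_nonneg_right (Real.exp_le_exp.2 ha) (abs_nonneg _)
  rw [abs_le']
  refine ⟨key a b ha, ?_⟩
  rw [neg_sub, abs_sub_comm]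
  exact key b a hb

lemma int_pl (f : (I → ℝ) → ℝ) (hf : Continuous f) :
    ∫ ω, f (pl ω) ∂(gam (I ⊕ I)) = ∫ x, f x ∂(gam I) := by
  have h := (measurePreserving_fst (μ := gam I) (ν := gam I)).comp (gam_sum I I)
  rw [← h.map_eq, integral_map h.measurable.aemeasurable hf.aestronglyMeasurable]
  rfl

lemma mgf_bdd {F : (I → ℝ) → ℝ} (hF : ContDiff ℝ 1 F) {B L : ℝ} (hL : 0 ≤ L)
    (hFB : ∀ x, |F x| ≤ B) (hFL : Lip L F) (h0 : ∫ x, F x ∂(gam I) = 0) (s : ℝ) (hs : 0 ≤ s) :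
    ∫ x, Real.exp (s * F x) ∂(gam I) ≤ Real.exp (s ^ 2 * L ^ 2 / 2) := by
  have hB : 0 ≤ B := (abs_nonneg _).trans (hFB 0)
  have cF := hF.continuous
  -- differential inequality
  have key : ∀ s, 0 ≤ s → ∫ x, F x * Real.exp (s * F x) ∂(gam I)
      ≤ s * L ^ 2 * ∫ x, Real.exp (s * F x) ∂(gam I) := by
    intro s hs
    set G : (I → ℝ) → ℝ := fun x => Real.exp (s * F x) with hGdef
    have hG : ContDiff ℝ 1 G := by
      rw [hGdef]; exact (contDiff_const.mul hF).exp
    have cG := hG.continuous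
    have hsF : ∀ x, s * F x ≤ s * B := fun x =>
      mul_le_mul_of_nonneg_left ((le_abs_self _).trans (hFB x)) hs
    have hGB : ∀ x, |G x| ≤ max (max B (Real.exp (s * B))) 1 := fun x => by
      rw [abs_of_pos (Real.exp_pos _)]
      exact (Real.exp_le_exp.2 (hsF x)).trans ((le_max_right _ _).trans (le_max_left _ _))
    have hFB' : ∀ x, |F x| ≤ max (max B (Real.exp (s * B))) 1 := fun x =>
      (hFB x).trans ((le_max_left _ _).trans (le_max_left _ _))
    have hGL : Lip (Real.exp (s * B) * (s * L)) G := fun x y => by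
      refine (abs_exp_sub_le (hsF x) (hsF y)).trans ?_
      rw [mul_assoc]
      refine mul_le_mul_of_nonneg_left ?_ (Real.exp_pos _).le
      rw [← mul_sub, abs_mul, abs_of_nonneg hs, mul_assoc]
      exact mul_le_mul_of_nonneg_left (hFL x y) hs
    have hLG : 0 ≤ Real.exp (s * B) * (s * L) := by positivity
    have hone : Lip 0 (fun _ : I → ℝ => (1 : ℝ)) := fun x y => by simp
    have hgrd : ∀ x j, grd G x j = s * G x * grd F x j := fun x j => by
      have : HasFDerivAt G (Real.exp (s * F x) • (s • fderiv ℝ F x)) x :=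
        (((hF.differentiable one_ne_zero x).hasFDerivAt).const_mul s).exp
      unfold grd
      rw [this.fderiv]
      simp [hGdef]; ring
    -- constancy of the law
    have hconst : ∀ θ, ∫ ω, G (xs θ ω) ∂(gam (I ⊕ I)) = ∫ x, G x ∂(gam I) := by
      intro θ
      have hd : ∀ θ, HasDerivAt (fun θ => ∫ ω, (1 : ℝ) * G (xs θ ω) ∂(gam (I ⊕ I))) 0 θ := by
        intro θ
        have := cov_deriv (F := fun _ : I → ℝ => (1 : ℝ)) contDiff_const hG le_rfl hLG
          (B := max (max B (Real.exp (s * B))) 1)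
          (fun x => by simp) hGB hone hGL θ
        refine this.congr_deriv ?_
        have hz : ∀ x : I → ℝ, grd (fun _ : I → ℝ => (1 : ℝ)) x = 0 := fun x => by
          funext j; simp [grd]
        simp [hz]
      have := is_const_of_deriv_eq_zero (fun θ => (hd θ).differentiableAt) (fun θ => (hd θ).deriv) θ 0
      simp only [one_mul] at this
      rw [this, ← int_pl G cG]
      congr 1; funext ω; congr 1; funext i; simp [xs, pl]
    set M := ∫ x, G x ∂(gam I) with hM
    set h : ℝ → ℝ := fun θ => ∫ ω, F (pl ω) * G (xs θ ω) ∂(gam (I ⊕ I)) with hh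
    have hd : ∀ θ, HasDerivAt (fun θ => h θ - Real.cos θ * (s * L ^ 2 * M))
        (-Real.sin θ * (∫ ω, grd F (pl ω) ⬝ᵥ grd G (xs θ ω) ∂(gam (I ⊕ I)))
          - (-Real.sin θ) * (s * L ^ 2 * M)) θ := fun θ =>
      (cov_deriv hF hG hL hLG hFB' hGB hFL hGL θ).sub
        ((Real.hasDerivAt_cos θ).mul_const _)
    have hle : ∀ θ, ∫ ω, grd F (pl ω) ⬝ᵥ grd G (xs θ ω) ∂(gam (I ⊕ I)) ≤ s * L ^ 2 * M := by
      intro θ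
      rw [← hconst θ, ← integral_const_mul]
      have cxs := xs_cont (I := I) θ
      have cpl := pl_cont (I := I)
      have hpt : ∀ ω, |grd F (pl ω) ⬝ᵥ grd G (xs θ ω)| ≤ s * L ^ 2 * G (xs θ ω) := by
        intro ω
        have : grd G (xs θ ω) = (s * G (xs θ ω)) • grd F (xs θ ω) := by
          funext j; rw [hgrd]; rfl
        have hGpos : 0 ≤ G (xs θ ω) := (Real.exp_pos _).le
        rw [this]
        refine (abs_dot_le _ _).trans ?_
        rw [nrm_smul, abs_of_nonneg (mul_nonneg hs hGpos)]
        have a1 := grd_nrm hL hFL hF (pl ω)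
        have a2 := grd_nrm hL hFL hF (xs θ ω)
        have a3 : nrm (grd F (pl ω)) * nrm (grd F (xs θ ω)) ≤ L * L :=
          mul_le_mul a1 a2 (nrm_nonneg _) hL
        nlinarith [mul_nonneg hs hGpos]
      have hGi : Integrable (fun ω => s * L ^ 2 * G (xs θ ω)) (gam (I ⊕ I)) :=
        (bdd_int (cG.comp cxs) _ (fun ω => hGB _)).const_mul _
      refine integral_mono (hGi.mono' ?_ (Filter.Eventually.of_forall hpt)) hGi
        fun ω => (le_abs_self _).trans (hpt ω)
      refine Continuous.aestronglyMeasurable ?_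
      unfold dotProduct
      exact continuous_finsetSum _ fun j _ => ((grd_cont hF j).comp cpl).mul
        ((grd_cont hG j).comp cxs)
    have hmono : MonotoneOn (fun θ => h θ - Real.cos θ * (s * L ^ 2 * M))
        (Set.Icc 0 (Real.pi / 2)) := by
      refine monotoneOn_of_deriv_nonneg (convex_Icc _ _)
        (fun θ _ => (hd θ).continuousAt.continuousWithinAt)
        (fun θ _ => (hd θ).differentiableAt.differentiableWithinAt) fun θ hθ => ?_
      rw [interior_Icc] at hθ
      rw [(hd θ).deriv]
      have : 0 ≤ Real.sin θ := Real.sin_nonneg_of_nonneg_of_le_pi hθ.1.le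
        (by linarith [hθ.2, Real.pi_pos])
      nlinarith [hle θ]
    have hfin := hmono (Set.left_mem_Icc.2 (by positivity)) (Set.right_mem_Icc.2 (by positivity))
      (by positivity : (0 : ℝ) ≤ Real.pi / 2)
    have hh0 : h 0 = ∫ x, F x * Real.exp (s * F x) ∂(gam I) := by
      rw [← int_pl (fun x => F x * Real.exp (s * F x)) (cF.mul cG)]
      refine integral_congr_ae (Filter.Eventually.of_forall fun ω => ?_)
      have : xs 0 ω = pl ω := by funext i; simp [xs, pl]
      show F (pl ω) * G (xs 0 ω) = _
      simp only [this, hGdef]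
    have hh1 : h (Real.pi / 2) = 0 := by
      have e : h (Real.pi / 2) = ∫ p, F p.1 * G p.2 ∂((gam I).prod (gam I)) := by
        rw [← (gam_sum I I).map_eq, integral_map (gam_sum I I).measurable.aemeasurable]
        · refine integral_congr_ae (Filter.Eventually.of_forall fun ω => ?_)
          have : xs (Real.pi / 2) ω = fun i => ω (Sum.inr i) := by funext i; simp [xs]
          show F (pl ω) * G (xs _ ω) = _
          simp only [this]; rfl
        · exact Continuous.aestronglyMeasurable (by fun_prop)
      rw [e, integral_prod_mul, h0, zero_mul]
    simp only [hh0, hh1, Real.cos_zero, Real.cos_pi_div_two] at hfin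
    linarith
  -- Gronwall
  have hset : ∀ s, s ∈ interior (integrableExpSet F (gam I)) := by
    have : integrableExpSet F (gam I) = Set.univ := by
      refine Set.eq_univ_of_forall fun s => ?_
      refine bdd_int (by fun_prop) (Real.exp (|s| * B)) fun x => ?_
      rw [abs_of_pos (Real.exp_pos _), Real.exp_le_exp]
      refine (le_abs_self _).trans ?_
      rw [abs_mul]
      exact mul_le_mul_of_nonneg_left (hFB x) (abs_nonneg _)
    rw [this, interior_univ]; exact fun s => Set.mem_univ s
  have hd : ∀ s, HasDerivAt (fun s => mgf F (gam I) s * Real.exp (-(s ^ 2 * L ^ 2 / 2)))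
      ((∫ x, F x * Real.exp (s * F x) ∂(gam I)) * Real.exp (-(s ^ 2 * L ^ 2 / 2))
       + mgf F (gam I) s * (Real.exp (-(s ^ 2 * L ^ 2 / 2)) * (-(s * L ^ 2)))) s := by
    intro s
    refine (hasDerivAt_mgf (hset s)).mul ?_
    have h1 : HasDerivAt (fun s : ℝ => -(s ^ 2 * L ^ 2 / 2)) (-(s * L ^ 2)) s := by
      refine ((((hasDerivAt_pow 2 s).mul_const (L ^ 2)).div_const 2).neg).congr_deriv ?_
      simp; ring
    exact h1.exp
  have hanti : AntitoneOn (fun s => mgf F (gam I) s * Real.exp (-(s ^ 2 * L ^ 2 / 2))) (Set.Ici 0) := by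
    refine antitoneOn_of_deriv_nonpos (convex_Ici 0)
        (fun θ _ => (hd θ).continuousAt.continuousWithinAt)
        (fun θ _ => (hd θ).differentiableAt.differentiableWithinAt) fun s hs => ?_
    rw [interior_Ici] at hs
    rw [(hd s).deriv]
    have := key s (le_of_lt hs)
    have hp := Real.exp_pos (-(s ^ 2 * L ^ 2 / 2))
    have : (∫ x, F x * Real.exp (s * F x) ∂(gam I)) - s * L ^ 2 * mgf F (gam I) s ≤ 0 := by
      unfold mgf; linarith
    nlinarith
  have := hanti (Set.self_mem_Ici) (Set.mem_Ici.2 hs) hs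
  simp only [mgf_zero, Real.exp_neg] at this
  norm_num at this
  rw [mul_inv_le_iff₀ (Real.exp_pos _), one_mul] at this
  exact this

lemma exp_lip {F : (I → ℝ) → ℝ} {L : ℝ} (hL : 0 ≤ L) (hFL : Lip L F) (s : ℝ) (hs : 0 ≤ s) :
    ∫⁻ x, ENNReal.ofReal (Real.exp (s * (F x - ∫ y, F y ∂(gam I)))) ∂(gam I)
      ≤ ENNReal.ofReal (Real.exp (s ^ 2 * L ^ 2 / 2)) := by
  have hcl : ∀ k : ℕ, Lip L (fun x => max (-(k : ℝ)) (min k (F x))) := fun k x y => by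
    refine le_trans ?_ (hFL x y)
    refine (abs_max_sub_max_le_max _ _ _ _).trans ?_
    simp only [sub_self, abs_zero]
    refine max_le (abs_nonneg _) ?_
    refine (abs_min_sub_min_le_max _ _ _ _).trans ?_
    simp
  have hpos : ∀ k : ℕ, (0 : ℝ) < 1 / (k + 1) := fun k => by positivity
  choose G hG1 hG2 hG3 using fun k : ℕ => mollify (hcl k) (hpos k)
  have hpt : ∀ x, Filter.Tendsto (fun k => G k x) Filter.atTop (nhds (F x)) := by
    intro x
    rw [tendsto_iff_dist_tendsto_zero]
    refine squeeze_zero' (Filter.Eventually.of_forall fun _ => dist_nonneg) ?_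
      tendsto_one_div_add_atTop_nhds_zero_nat
    filter_upwards [Filter.eventually_ge_atTop ⌈|F x|⌉₊] with k hk
    have hk' : |F x| ≤ k := (Nat.le_ceil _).trans (by exact_mod_cast hk)
    have := hG3 k x
    rw [min_eq_right ((le_abs_self _).trans hk'), max_eq_right (by
      have := neg_abs_le (F x); linarith)] at this
    rw [Real.dist_eq]; exact this
  have hGi : ∀ k, Integrable (G k) (gam I) := fun k => (hG2 k).int
  have hGbd : ∀ k x, |G k x| ≤ k + 1 := fun k x => by
    have h1 := hG3 k x
    have h2 : (1 : ℝ) / (k + 1) ≤ 1 := by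
      rw [div_le_one (by positivity)]; linarith [Nat.cast_nonneg (α := ℝ) k]
    have h3 : |max (-(k : ℝ)) (min k (F x))| ≤ k := by
      rw [abs_le]
      exact ⟨le_max_left _ _, max_le (by linarith [Nat.cast_nonneg (α := ℝ) k]) (min_le_left _ _)⟩
    have h4 := abs_sub_abs_le_abs_sub (G k x) (max (-(k : ℝ)) (min k (F x)))
    linarith
  have hmean : Filter.Tendsto (fun k => ∫ y, G k y ∂(gam I)) Filter.atTop
      (nhds (∫ y, F y ∂(gam I))) := by
    refine tendsto_integral_of_dominated_convergence (fun x => |F x| + 1)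
      (fun k => (hG2 k).cont.aestronglyMeasurable) (hFL.int.abs.add (integrable_const 1))
      (fun k => Filter.Eventually.of_forall fun x => ?_) (Filter.Eventually.of_forall hpt)
    have h1 := hG3 k x
    have h2 : (1 : ℝ) / (k + 1) ≤ 1 := by
      rw [div_le_one (by positivity)]; linarith [Nat.cast_nonneg (α := ℝ) k]
    have h3 : |max (-(k : ℝ)) (min k (F x))| ≤ |F x| := by
      rw [abs_le]
      constructor
      · by_cases hh : F x ≤ k
        · rw [min_eq_right hh]; exact (neg_abs_le _).trans (le_max_right _ _)
        · push Not at hh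
          rw [min_eq_left hh.le]
          exact le_trans (by linarith [abs_nonneg (F x), Nat.cast_nonneg (α := ℝ) k]) (le_max_right _ _)
      · exact max_le (by linarith [abs_nonneg (F x), Nat.cast_nonneg (α := ℝ) k])
          ((min_le_right _ _).trans (le_abs_self _))
    have h4 := abs_sub_abs_le_abs_sub (G k x) (max (-(k : ℝ)) (min k (F x)))
    rw [Real.norm_eq_abs]
    linarith
  have hk : ∀ k, ∫⁻ x, ENNReal.ofReal (Real.exp (s * (G k x - ∫ y, G k y ∂(gam I)))) ∂(gam I)
      ≤ ENNReal.ofReal (Real.exp (s ^ 2 * L ^ 2 / 2)) := by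
    intro k
    set c := ∫ y, G k y ∂(gam I) with hc
    have hb : ∀ x, |G k x - c| ≤ k + 1 + |c| := fun x => (abs_sub _ _).trans (by linarith [hGbd k x])
    rw [← ofReal_integral_eq_lintegral_ofReal]
    · refine ENNReal.ofReal_le_ofReal ?_
      refine mgf_bdd (F := fun x => G k x - c) ((hG1 k).sub contDiff_const) hL hb
        (fun x y => by simpa using hG2 k x y) ?_ s hs
      rw [integral_sub (hGi k) (integrable_const c)]
      simp [hc]
    · have := (hG2 k).cont
      refine bdd_int (by fun_prop) (Real.exp (s * (k + 1 + |c|))) fun x => ?_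
      rw [abs_of_pos (Real.exp_pos _), Real.exp_le_exp]
      exact mul_le_mul_of_nonneg_left ((le_abs_self _).trans (hb x)) hs
    · exact Filter.Eventually.of_forall fun x => (Real.exp_pos _).le
  have hlim : ∀ x, Filter.liminf (fun k => ENNReal.ofReal
      (Real.exp (s * (G k x - ∫ y, G k y ∂(gam I))))) Filter.atTop
      = ENNReal.ofReal (Real.exp (s * (F x - ∫ y, F y ∂(gam I)))) := fun x => by
    refine Filter.Tendsto.liminf_eq (ENNReal.tendsto_ofReal ?_)
    exact (Real.continuous_exp.tendsto _).comp (((hpt x).sub hmean).const_mul s)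
  simp_rw [← hlim]
  refine (lintegral_liminf_le fun k => ?_).trans ?_
  · have := (hG2 k).cont
    exact (Continuous.measurable (by fun_prop)).ennreal_ofReal
  · refine Filter.liminf_le_of_frequently_le' (Filter.Frequently.of_forall hk)

lemma conc {F : (I → ℝ) → ℝ} {L : ℝ} (hL : 0 < L) (hFL : Lip L F) (r : ℝ) (hr : 0 ≤ r) :
    gam I {x | (∫ y, F y ∂(gam I)) + r ≤ F x} ≤ ENNReal.ofReal (Real.exp (-r ^ 2 / (2 * L ^ 2))) := by
  set c := ∫ y, F y ∂(gam I) with hc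
  set s := r / L ^ 2 with hs
  have hs0 : 0 ≤ s := by positivity
  have h1 := exp_lip hL.le hFL s hs0
  have hcont := hFL.cont
  have h2 := mul_meas_ge_le_lintegral₀ (μ := gam I)
    (f := fun x => ENNReal.ofReal (Real.exp (s * (F x - c))))
    (Continuous.measurable (by fun_prop)).ennreal_ofReal.aemeasurable
    (ENNReal.ofReal (Real.exp (s * r)))
  have h3 : {x | c + r ≤ F x} ⊆ {x | ENNReal.ofReal (Real.exp (s * r))
      ≤ ENNReal.ofReal (Real.exp (s * (F x - c)))} := fun x hx => by
    refine ENNReal.ofReal_le_ofReal (Real.exp_le_exp.2 (mul_le_mul_of_nonneg_left ?_ hs0))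
    have : c + r ≤ F x := hx
    linarith
  have h4 := (mul_le_mul_right (measure_mono (μ := gam I) h3) (ENNReal.ofReal (Real.exp (s * r)))).trans
    (h2.trans h1)
  have h5 : ENNReal.ofReal (Real.exp (s ^ 2 * L ^ 2 / 2)) = ENNReal.ofReal (Real.exp (s * r))
      * ENNReal.ofReal (Real.exp (-r ^ 2 / (2 * L ^ 2))) := by
    rw [← ENNReal.ofReal_mul (Real.exp_pos _).le, ← Real.exp_add]
    congr 2
    rw [hs]; field_simp; ring
  rw [h5] at h4
  refine (ENNReal.mul_le_mul_iff_right ?_ ENNReal.ofReal_ne_top).1 h4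
  simp [Real.exp_pos]

end


section
variable {U : Type} [Fintype U] [Nonempty U]

noncomputable def lse (x : U → ℝ) : ℝ := Real.log (∑ u, Real.exp (x u))
noncomputable def smx (x : U → ℝ) (u : U) : ℝ := Real.exp (x u) / ∑ u, Real.exp (x u)

lemma sexp_pos (x : U → ℝ) : 0 < ∑ u, Real.exp (x u) :=
  Finset.sum_pos (fun _ _ => Real.exp_pos _) Finset.univ_nonempty

lemma smx_nonneg (x : U → ℝ) (u : U) : 0 ≤ smx x u :=
  div_nonneg (Real.exp_pos _).le (sexp_pos x).le

lemma smx_le_one (x : U → ℝ) (u : U) : smx x u ≤ 1 := by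
  unfold smx
  rw [div_le_one (sexp_pos x)]
  exact Finset.single_le_sum (f := fun u => Real.exp (x u)) (fun _ _ => (Real.exp_pos _).le)
    (Finset.mem_univ u)

lemma smx_sum (x : U → ℝ) : ∑ u, smx x u = 1 := by
  unfold smx
  rw [← Finset.sum_div, div_self (sexp_pos x).ne']

lemma smx_cont (u : U) : Continuous (fun x : U → ℝ => smx x u) := by
  unfold smx
  exact Continuous.div (by fun_prop) (by fun_prop) fun x => (sexp_pos x).ne'

lemma lse_cont : Continuous (lse : (U → ℝ) → ℝ) := by
  unfold lse
  exact Continuous.log (by fun_prop) fun x => (sexp_pos x).ne'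

lemma le_lse (x : U → ℝ) (u : U) : x u ≤ lse x := by
  unfold lse
  rw [Real.le_log_iff_exp_le (sexp_pos x)]
  exact Finset.single_le_sum (f := fun u => Real.exp (x u)) (fun _ _ => (Real.exp_pos _).le)
    (Finset.mem_univ u)

lemma lse_le (x : U → ℝ) (M : ℝ) (h : ∀ u, x u ≤ M) : lse x ≤ M + Real.log (Fintype.card U) := by
  unfold lse
  have hc : (0 : ℝ) < Fintype.card U := by exact_mod_cast Fintype.card_pos
  rw [Real.log_le_iff_le_exp (sexp_pos x), Real.exp_add, Real.exp_log hc]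
  refine (Finset.sum_le_sum fun u _ => Real.exp_le_exp.2 (h u)).trans ?_
  simp [mul_comm]

lemma abs_lse_le (x : U → ℝ) : |lse x| ≤ ∑ u, |x u| + Real.log (Fintype.card U) := by
  have h0 : 0 ≤ Real.log (Fintype.card U) := Real.log_natCast_nonneg _
  have hs : ∀ u, |x u| ≤ ∑ u, |x u| := fun u =>
    Finset.single_le_sum (f := fun u => |x u|) (fun _ _ => abs_nonneg _) (Finset.mem_univ u)
  rw [abs_le']
  constructor
  · exact lse_le x _ fun u => (le_abs_self _).trans (hs u)
  · obtain ⟨u⟩ := ‹Nonempty U›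
    have := le_lse x u
    have := neg_abs_le (x u)
    have := hs u
    linarith

lemma lse_deriv {x : ℝ → U → ℝ} {x' : U → ℝ} {t : ℝ} (h : ∀ u, HasDerivAt (fun t => x t u) (x' u) t) :
    HasDerivAt (fun t => lse (x t)) (∑ u, smx (x t) u * x' u) t := by
  have h1 : HasDerivAt (fun t => ∑ u, Real.exp (x t u)) (∑ u, Real.exp (x t u) * x' u) t :=
    HasDerivAt.fun_sum fun u _ => (h u).exp
  refine (h1.log (sexp_pos _).ne').congr_deriv ?_
  rw [Finset.sum_div]
  refine Finset.sum_congr rfl fun u _ => ?_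
  unfold smx; ring

lemma smx_deriv {x : ℝ → U → ℝ} {x' : U → ℝ} {t : ℝ} (h : ∀ u, HasDerivAt (fun t => x t u) (x' u) t)
    (u : U) :
    HasDerivAt (fun t => smx (x t) u) (smx (x t) u * (x' u - ∑ u, smx (x t) u * x' u)) t := by
  have h1 : ∀ x : U → ℝ, smx x u = Real.exp (x u - lse x) := fun x => by
    unfold smx lse
    rw [Real.exp_sub, Real.exp_log (sexp_pos x)]
  have h2 := ((h u).sub (lse_deriv h)).exp
  simp only [h1]
  refine h2.congr_deriv ?_
  simp [h1]

variable {I : Type} [Fintype I]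

/-- Gaussian integration by parts for softmax weights. -/
lemma stein_smx {X Y : (I → ℝ) → U → ℝ} {w : (I → ℝ) → ℝ} (e : I → ℝ) {B W : ℝ}
    (hX : ∀ ω u, HasDerivAt (fun t : ℝ => X (ω + t • e) u) (Y ω u) 0)
    (hw : ∀ ω (t : ℝ), w (ω + t • e) = w ω)
    (cX : ∀ u, Continuous fun ω => X ω u) (cY : ∀ u, Continuous fun ω => Y ω u)
    (cw : Continuous w) (hY : ∀ ω u, |Y ω u| ≤ B) (hW : ∀ ω, |w ω| ≤ W) (u : U) :
    ∫ ω, (smx (X ω) u * w ω) * (e ⬝ᵥ ω) ∂(gam I)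
      = ∫ ω, smx (X ω) u * (Y ω u - ∑ u', smx (X ω) u' * Y ω u') * w ω ∂(gam I) := by
  have cX' : Continuous X := continuous_pi cX
  have cs : ∀ u, Continuous fun ω => smx (X ω) u := fun u => (smx_cont u).comp cX'
  have hW0 : 0 ≤ W := (abs_nonneg _).trans (hW 0)
  have hB0 : 0 ≤ B := (abs_nonneg _).trans (hY 0 u)
  have b1 : ∀ ω, |smx (X ω) u * w ω| ≤ 1 * W := fun ω => by
    rw [abs_mul, abs_of_nonneg (smx_nonneg _ _)]
    exact mul_le_mul (smx_le_one _ _) (hW ω) (abs_nonneg _) zero_le_one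
  have c1 : Continuous fun ω => smx (X ω) u * w ω := (cs u).mul cw
  refine stein e (fun ω => ?_) (bdd_int c1 _ b1) (bdd_int ?_ (1 * (B + B) * W) fun ω => ?_)
    (bdd_mul_dot_int c1 _ b1 e)
  · unfold HasLineDerivAt
    simp only [hw]
    have := smx_deriv (x := fun t : ℝ => X (ω + t • e)) (hX ω) u
    simp only [zero_smul, add_zero] at this
    exact this.mul_const _
  · have : Continuous fun ω => ∑ u', smx (X ω) u' * Y ω u' :=
      continuous_finsetSum _ fun u' _ => (cs u').mul (cY u')
    exact ((cs u).mul ((cY u).sub this)).mul cw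
  · rw [abs_mul, abs_mul, abs_of_nonneg (smx_nonneg _ _)]
    refine mul_le_mul (mul_le_mul (smx_le_one _ _) ?_ (abs_nonneg _) zero_le_one) (hW ω)
      (abs_nonneg _) (by positivity)
    refine (abs_sub _ _).trans (add_le_add (hY ω u) ?_)
    refine (Finset.abs_sum_le_sum_abs _ _).trans ?_
    calc ∑ u', |smx (X ω) u' * Y ω u'| ≤ ∑ u', smx (X ω) u' * B := by
          refine Finset.sum_le_sum fun u' _ => ?_
          rw [abs_mul, abs_of_nonneg (smx_nonneg _ _)]
          exact mul_le_mul_of_nonneg_left (hY ω u') (smx_nonneg _ _)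
      _ = B := by rw [← Finset.sum_mul, smx_sum, one_mul]

end


/-- covariance structure for the comparison -/
structure Cfg {U I J : Type} [Fintype I] [DecidableEq J] (r : U → U → ℝ) (a : U → J → I → ℝ) (h : J → I → ℝ)
    (g d : U → I → ℝ) : Prop where
  aa : ∀ u u' j j', a u j ⬝ᵥ a u' j' = if j = j' then r u u' else 0
  hh : ∀ j j', h j ⬝ᵥ h j' = if j = j' then 1 else 0
  ah : ∀ u j j', a u j ⬝ᵥ h j' = 0
  gg : ∀ u u', g u ⬝ᵥ g u' = r u u'
  ga : ∀ u u' j, g u ⬝ᵥ a u' j = 0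
  gh : ∀ u j, g u ⬝ᵥ h j = 0
  da : ∀ u u' j, d u ⬝ᵥ a u' j = 0
  dh : ∀ u j, d u ⬝ᵥ h j = 0
  dg : ∀ u u', d u ⬝ᵥ g u' = 0
  r1 : ∀ u, r u u = 1
  rle : ∀ u u', r u u' ≤ 1
  rsymm : ∀ u u', r u u' = r u' u

set_option linter.unusedSectionVars false
section
variable {U I J : Type} [Fintype U] [Nonempty U] [Fintype I] [Fintype J] [DecidableEq J]

noncomputable def PP (a : U → J → I → ℝ) (h : J → I → ℝ) (θ : ℝ) (u : U) (ω : I → ℝ) : J → ℝ :=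
  fun j => Real.sin θ * (a u j ⬝ᵥ ω) + Real.cos θ * (h j ⬝ᵥ ω)

noncomputable def XX (κ : (J → ℝ) → ℝ) (C : ℝ) (a : U → J → I → ℝ) (h : J → I → ℝ)
    (g d : U → I → ℝ) (θ : ℝ) (ω : I → ℝ) (u : U) : ℝ :=
  κ (PP a h θ u ω) + Real.cos θ * C * (g u ⬝ᵥ ω) + d u ⬝ᵥ ω

lemma dot_cont (e : I → ℝ) : Continuous fun ω : I → ℝ => e ⬝ᵥ ω := by
  unfold dotProduct; fun_prop

lemma PP_cont (a : U → J → I → ℝ) (h : J → I → ℝ) (θ : ℝ) (u : U) : Continuous (PP a h θ u) := by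
  unfold PP dotProduct; fun_prop

lemma XX_int {a : U → J → I → ℝ} {h : J → I → ℝ}
    {g d : U → I → ℝ} {κ : (J → ℝ) → ℝ} {C : ℝ}
    (hC : 0 ≤ C) (hL : Lip C κ) (θ : ℝ) (u : U) :
    Integrable (fun ω => XX κ C a h g d θ ω u) (gam I) := by
    set P := PP a h with hP
    have cP : ∀ θ u, Continuous (P θ u) := fun θ u => PP_cont a h θ u
    have cκ := hL.cont
    have hPi : Integrable (fun ω => κ (P θ u ω)) (gam I) := by
      refine Integrable.mono' (g := fun ω => |κ 0| + C * (Real.sqrt (Fintype.card J) *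
        ∑ j, (|a u j ⬝ᵥ ω| + |h j ⬝ᵥ ω|))) ?_ (cκ.comp (cP θ u)).aestronglyMeasurable
        (Filter.Eventually.of_forall fun ω => ?_)
      · refine (integrable_const _).add (Integrable.const_mul (Integrable.const_mul ?_ _) _)
        exact integrable_finsetSum _ fun j _ => (gam_int_dot _).abs.add (gam_int_dot _).abs
      · rw [Real.norm_eq_abs]
        have h1 := hL (P θ u ω) 0
        rw [sub_zero] at h1
        have h2 := abs_sub_abs_le_abs_sub (κ (P θ u ω)) (κ 0)
        have h3 : nrm (P θ u ω) ≤ Real.sqrt (Fintype.card J) * ∑ j, (|a u j ⬝ᵥ ω| + |h j ⬝ᵥ ω|) := by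
          refine (nrm_le_card _).trans (mul_le_mul_of_nonneg_left ?_ (Real.sqrt_nonneg _))
          rw [pi_norm_le_iff_of_nonneg (by positivity)]
          intro j
          refine le_trans ?_ (Finset.single_le_sum (f := fun j => (|a u j ⬝ᵥ ω| + |h j ⬝ᵥ ω|))
            (fun _ _ => by positivity) (Finset.mem_univ j))
          rw [Real.norm_eq_abs]
          refine (abs_add_le _ _).trans (add_le_add ?_ ?_)
          · rw [abs_mul]; exact mul_le_of_le_one_left (abs_nonneg _) (Real.abs_sin_le_one θ)
          · rw [abs_mul]; exact mul_le_of_le_one_left (abs_nonneg _) (Real.abs_cos_le_one θ)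
        nlinarith [mul_le_mul_of_nonneg_left h3 hC]
    exact (hPi.add ((gam_int_dot _).const_mul _)).add (gam_int_dot _)

lemma cmp_deriv_nonpos {r : U → U → ℝ} {a : U → J → I → ℝ} {h : J → I → ℝ}
    {g d : U → I → ℝ} (cfg : Cfg r a h g d) {κ : (J → ℝ) → ℝ} (hκ : ContDiff ℝ 1 κ) {C : ℝ}
    (hC : 0 ≤ C) (hL : Lip C κ) (θ : ℝ) (hθ : θ ∈ Set.Icc 0 (Real.pi / 2)) :
    ∃ D ≤ 0, HasDerivAt (fun θ => ∫ ω, lse (XX κ C a h g d θ ω) ∂(gam I)) D θ := by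
  set P := PP a h with hP
  set X := XX κ C a h g d with hX
  set q : ℝ → U → J → I → ℝ := fun θ u j => Real.cos θ • a u j - Real.sin θ • h j with hq
  set X' : ℝ → (I → ℝ) → U → ℝ := fun θ ω u => ∑ j, grd κ (P θ u ω) j * (q θ u j ⬝ᵥ ω)
    - Real.sin θ * C * (g u ⬝ᵥ ω) with hX'
  have cκ := hκ.continuous
  have cP : ∀ θ u, Continuous (P θ u) := fun θ u => PP_cont a h θ u
  have cX : ∀ θ u, Continuous fun ω => X θ ω u := fun θ u => by
    have := cP θ u
    have := dot_cont (g u)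
    have := dot_cont (d u)
    simp only [hX, XX]
    exact ((cκ.comp (cP θ u)).add (by fun_prop)).add (by fun_prop)
  have cXX : ∀ θ, Continuous (X θ) := fun θ => continuous_pi (cX θ)
  have cs : ∀ θ u, Continuous fun ω => smx (X θ ω) u := fun θ u => (smx_cont u).comp (cXX θ)
  have ck : ∀ θ u j, Continuous fun ω => grd κ (P θ u ω) j := fun θ u j =>
    (grd_cont hκ j).comp (cP θ u)
  have bk : ∀ θ u ω j, |grd κ (P θ u ω) j| ≤ C := fun θ u ω j =>
    (abs_grd_le _ _ _).trans (grd_nrm hC hL hκ _)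
  have cX' : ∀ θ u, Continuous fun ω => X' θ ω u := fun θ u => by
    refine (continuous_finsetSum _ fun j _ => (ck θ u j).mul (dot_cont _)).sub
      (continuous_const.mul (dot_cont _))
  have hPd : ∀ ω u θ, HasDerivAt (fun θ => P θ u ω) (fun j => q θ u j ⬝ᵥ ω) θ := fun ω u θ => by
    rw [hasDerivAt_pi]
    intro j
    refine (((Real.hasDerivAt_sin θ).mul_const _).add ((Real.hasDerivAt_cos θ).mul_const _)).congr_deriv ?_
    simp only [hq, sub_dotProduct, smul_dotProduct, smul_eq_mul]; ring
  have hXd : ∀ ω u θ, HasDerivAt (fun θ => X θ ω u) (X' θ ω u) θ := fun ω u θ => by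
    have h1 : HasDerivAt (fun θ => κ (P θ u ω)) (fderiv ℝ κ (P θ u ω) (fun j => q θ u j ⬝ᵥ ω)) θ :=
      (hκ.differentiable one_ne_zero _).hasFDerivAt.comp_hasDerivAt θ (hPd ω u θ)
    rw [fderiv_eq_grd] at h1
    have h2 := (((Real.hasDerivAt_cos θ).mul_const C).mul_const (g u ⬝ᵥ ω))
    refine ((h1.add h2).add_const (d u ⬝ᵥ ω)).congr_deriv ?_
    simp only [hX', dotProduct]; ring
  have bX' : ∀ θ ω u, |X' θ ω u| ≤ ∑ j, C * (|a u j ⬝ᵥ ω| + |h j ⬝ᵥ ω|) + C * |g u ⬝ᵥ ω| := by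
    intro θ ω u
    refine (abs_sub _ _).trans (add_le_add ?_ ?_)
    · refine (Finset.abs_sum_le_sum_abs _ _).trans (Finset.sum_le_sum fun j _ => ?_)
      rw [abs_mul]
      refine mul_le_mul (bk θ u ω j) ?_ (abs_nonneg _) hC
      simp only [hq, sub_dotProduct, smul_dotProduct, smul_eq_mul]
      refine (abs_sub _ _).trans (add_le_add ?_ ?_)
      · rw [abs_mul]; exact mul_le_of_le_one_left (abs_nonneg _) (Real.abs_cos_le_one θ)
      · rw [abs_mul]; exact mul_le_of_le_one_left (abs_nonneg _) (Real.abs_sin_le_one θ)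
    · rw [abs_mul, abs_mul, abs_of_nonneg hC]
      exact mul_le_mul_of_nonneg_right (mul_le_of_le_one_left hC (Real.abs_sin_le_one θ)) (abs_nonneg _)
  have iX : ∀ u, Integrable (fun ω => X θ ω u) (gam I) := fun u => by
    exact XX_int hC hL θ u
  have key := hasDerivAt_integral_of_dominated_loc_of_deriv_le (μ := gam I)
    (F := fun θ ω => lse (X θ ω))
    (F' := fun θ ω => ∑ u, smx (X θ ω) u * X' θ ω u) (x₀ := θ) (s := Set.univ)
    (bound := fun ω => ∑ u, (∑ j, C * (|a u j ⬝ᵥ ω| + |h j ⬝ᵥ ω|) + C * |g u ⬝ᵥ ω|)) Filter.univ_mem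
    (Filter.Eventually.of_forall fun θ => (lse_cont.comp (cXX θ)).aestronglyMeasurable)
    (by
      refine Integrable.mono' (g := fun ω => ∑ u, |X θ ω u| + Real.log (Fintype.card U)) ?_
        (lse_cont.comp (cXX θ)).aestronglyMeasurable (Filter.Eventually.of_forall fun ω => abs_lse_le _)
      exact (integrable_finsetSum _ fun u _ => (iX u).abs).add (integrable_const _))
    (Continuous.aestronglyMeasurable
      (continuous_finsetSum _ fun u _ => (cs θ u).mul (cX' θ u)))
    (Filter.Eventually.of_forall fun ω θ _ => by
      rw [Real.norm_eq_abs]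
      refine (Finset.abs_sum_le_sum_abs _ _).trans (Finset.sum_le_sum fun u _ => ?_)
      rw [abs_mul, abs_of_nonneg (smx_nonneg _ _)]
      exact (mul_le_of_le_one_left (abs_nonneg _) (smx_le_one _ _)).trans (bX' θ ω u))
    (integrable_finsetSum _ fun u _ => (integrable_finsetSum _ fun j _ =>
      (((gam_int_dot _).abs.add (gam_int_dot _).abs).const_mul _)).add ((gam_int_dot _).abs.const_mul _))
    (Filter.Eventually.of_forall fun ω θ _ => lse_deriv fun u => hXd ω u θ)
  refine ⟨_, ?_, key.2⟩
  have hdot : ∀ (e f : I → ℝ) (ω : I → ℝ) (t : ℝ), e ⬝ᵥ (ω + t • f) = e ⬝ᵥ ω + t * (e ⬝ᵥ f) := by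
    intro e f ω t; rw [dotProduct_add, dotProduct_smul, smul_eq_mul]
  set sc := Real.sin θ * Real.cos θ with hsc
  have ha0 : ∀ j u, h j ⬝ᵥ a u j = 0 := fun j u => by rw [dotProduct_comm, cfg.ah]
  -- Stein 1
  have hPq : ∀ u j u' ω (t : ℝ), P θ u' (ω + t • q θ u j)
      = P θ u' ω + t • Pi.single j (-(sc * (1 - r u u'))) := by
    intro u j u' ω t
    funext l
    have hal : h l ⬝ᵥ a u j = 0 := by rw [dotProduct_comm, cfg.ah]
    simp only [hP, PP, hdot, hq, dotProduct_sub, dotProduct_smul, cfg.aa, cfg.hh, cfg.ah, hal,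
      Pi.add_apply, Pi.smul_apply, smul_eq_mul]
    by_cases hl : l = j
    · subst hl; simp only [if_true, Pi.single_eq_same, cfg.rsymm u' u, hsc]; ring
    · simp only [hl, if_false, Pi.single_eq_of_ne hl]; ring
  have hr0 : ∀ u u', 0 ≤ 1 - r u u' := fun u u' => by linarith [cfg.rle u u']
  obtain ⟨R, hR⟩ : ∃ R : ℝ, ∀ u u', |r u u'| ≤ R := by
    refine ⟨∑ u, ∑ u', |r u u'|, fun u u' => ?_⟩
    refine (Finset.single_le_sum (f := fun u' => |r u u'|) (fun _ _ => abs_nonneg _)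
      (Finset.mem_univ u')).trans ?_
    exact Finset.single_le_sum (f := fun u => ∑ u', |r u u'|)
      (fun _ _ => Finset.sum_nonneg fun _ _ => abs_nonneg _) (Finset.mem_univ u)
  have hR0 : 0 ≤ R := by
    obtain ⟨u⟩ := ‹Nonempty U›
    exact (abs_nonneg _).trans (hR u u)
  have st1 : ∀ u j, ∫ ω, (smx (X θ ω) u * grd κ (P θ u ω) j) * (q θ u j ⬝ᵥ ω) ∂(gam I)
      = ∫ ω, ∑ u', sc * (smx (X θ ω) u * smx (X θ ω) u' * (1 - r u u')
        * (grd κ (P θ u ω) j * grd κ (P θ u' ω) j)) ∂(gam I) := by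
    intro u j
    rw [stein_smx (X := X θ) (Y := fun ω u' => -(sc * (1 - r u u')) * grd κ (P θ u' ω) j)
      (q θ u j) (B := |sc| * (1 + R) * C) (W := C) ?_ ?_ (cX θ) ?_ (ck θ u j) ?_ ?_ u]
    · refine integral_congr_ae (Filter.Eventually.of_forall fun ω => ?_)
      simp only [cfg.r1, sub_self, mul_zero, neg_zero, zero_mul, zero_sub]
      rw [← Finset.sum_neg_distrib, Finset.mul_sum, Finset.sum_mul]
      refine Finset.sum_congr rfl fun u' _ => ?_
      ring
    · intro ω u'
      have hd : HasDerivAt (fun t : ℝ => κ (P θ u' ω + t • Pi.single j (-(sc * (1 - r u u'))))) _ 0 :=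
        (hκ.differentiable one_ne_zero (P θ u' ω)).hasFDerivAt.hasLineDerivAt _
      rw [fderiv_eq_grd, dotProduct_single] at hd
      have e1 : (fun t : ℝ => X θ (ω + t • q θ u j) u') = fun t : ℝ =>
          κ (P θ u' ω + t • Pi.single j (-(sc * (1 - r u u')))) +
          (Real.cos θ * C * (g u' ⬝ᵥ ω) + d u' ⬝ᵥ ω) := by
        funext t
        have h1 : g u' ⬝ᵥ q θ u j = 0 := by
          simp [hq, dotProduct_sub, dotProduct_smul, cfg.ga, cfg.gh]
        have h2 : d u' ⬝ᵥ q θ u j = 0 := by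
          simp [hq, dotProduct_sub, dotProduct_smul, cfg.da, cfg.dh]
        rw [← hPq u j u' ω t]
        simp only [hX, XX, hdot, h1, h2, mul_zero, add_zero, ← hP]; ring
      rw [e1]
      exact (hd.add_const _).congr_deriv (by ring)
    · intro ω t
      rw [hPq, cfg.r1]; simp
    · exact fun u' => continuous_const.mul (ck θ u' j)
    · intro ω u'
      rw [abs_mul, abs_neg, abs_mul]
      refine mul_le_mul (mul_le_mul_of_nonneg_left ?_ (abs_nonneg _)) (bk θ u' ω j) (abs_nonneg _)
        (by positivity)
      refine (abs_sub _ _).trans ?_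
      simpa using hR u u'
    · exact fun ω => bk θ u ω j
  -- Stein 2
  have st2 : ∀ u, ∫ ω, (smx (X θ ω) u * (Real.sin θ * C)) * (g u ⬝ᵥ ω) ∂(gam I)
      = ∫ ω, ∑ u', sc * (smx (X θ ω) u * smx (X θ ω) u' * (1 - r u u') * C ^ 2) ∂(gam I) := by
    intro u
    rw [stein_smx (X := X θ) (Y := fun ω u' => Real.cos θ * C * r u u')
      (w := fun _ => Real.sin θ * C) (g u) (B := |Real.cos θ| * C * R) (W := |Real.sin θ * C|)
      ?_ ?_ (cX θ) ?_ continuous_const ?_ ?_ u]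
    · refine integral_congr_ae (Filter.Eventually.of_forall fun ω => ?_)
      simp only [cfg.r1, mul_one]
      have e : Real.cos θ * C = ∑ u', smx (X θ ω) u' * (Real.cos θ * C) := by
        rw [← Finset.sum_mul, smx_sum, one_mul]
      conv_lhs => enter [1, 2, 1]; rw [e]
      rw [← Finset.sum_sub_distrib, Finset.mul_sum, Finset.sum_mul]
      refine Finset.sum_congr rfl fun u' _ => ?_
      rw [hsc]; ring
    · intro ω u'
      have hPg : ∀ t : ℝ, P θ u' (ω + t • g u) = P θ u' ω := fun t => by
        funext l
        have h1 : a u' l ⬝ᵥ g u = 0 := by rw [dotProduct_comm, cfg.ga]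
        have h2 : h l ⬝ᵥ g u = 0 := by rw [dotProduct_comm, cfg.gh]
        simp [hP, PP, hdot, h1, h2]
      have e1 : (fun t : ℝ => X θ (ω + t • g u) u') = fun t : ℝ =>
          X θ ω u' + t * (Real.cos θ * C * r u u') := by
        funext t
        have := hPg t
        simp only [hP] at this
        simp only [hX, XX, this, hdot, cfg.dg, cfg.gg, cfg.rsymm u' u]; ring
      rw [e1]
      exact (((hasDerivAt_id (0 : ℝ)).mul_const _).const_add _).congr_deriv (by ring)
    · intro ω t; rfl
    · exact fun u' => continuous_const
    · intro ω u'
      rw [abs_mul, abs_mul, abs_of_nonneg hC]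
      exact mul_le_mul_of_nonneg_left (hR u u') (by positivity)
    · exact fun ω => le_rfl
  have hsc0 : 0 ≤ sc := mul_nonneg (Real.sin_nonneg_of_nonneg_of_le_pi hθ.1
    (by linarith [hθ.2, Real.pi_pos])) (Real.cos_nonneg_of_neg_pi_div_two_le_of_le
      (by linarith [hθ.1, Real.pi_pos]) hθ.2)
  have i1 : ∀ u j, Integrable (fun ω => (smx (X θ ω) u * grd κ (P θ u ω) j) * (q θ u j ⬝ᵥ ω)) (gam I) := by
    intro u j
    refine bdd_mul_dot_int ((cs θ u).mul (ck θ u j)) (1 * C) (fun ω => ?_) _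
    show |smx (X θ ω) u * grd κ (P θ u ω) j| ≤ _
    rw [abs_mul, abs_of_nonneg (smx_nonneg _ _)]
    exact mul_le_mul (smx_le_one _ _) (bk _ _ _ _) (abs_nonneg _) zero_le_one
  have i2 : ∀ u, Integrable (fun ω => (smx (X θ ω) u * (Real.sin θ * C)) * (g u ⬝ᵥ ω)) (gam I) := by
    intro u
    refine bdd_mul_dot_int ((cs θ u).mul continuous_const) (1 * |Real.sin θ * C|) (fun ω => ?_) _
    show |smx (X θ ω) u * (Real.sin θ * C)| ≤ _
    rw [abs_mul (smx _ _), abs_of_nonneg (smx_nonneg _ _)]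
    exact mul_le_mul (smx_le_one _ _) le_rfl (abs_nonneg _) zero_le_one
  have e0 : ∀ ω, ∑ u, smx (X θ ω) u * X' θ ω u
      = ∑ u, (∑ j, (smx (X θ ω) u * grd κ (P θ u ω) j) * (q θ u j ⬝ᵥ ω)
        - (smx (X θ ω) u * (Real.sin θ * C)) * (g u ⬝ᵥ ω)) := fun ω => by
    refine Finset.sum_congr rfl fun u _ => ?_
    simp only [hX', mul_sub, Finset.mul_sum, mul_assoc]
  simp only [e0]
  have i5 : ∀ u, Integrable (fun ω => ∑ j, (smx (X θ ω) u * grd κ (P θ u ω) j) * (q θ u j ⬝ᵥ ω)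
        - (smx (X θ ω) u * (Real.sin θ * C)) * (g u ⬝ᵥ ω)) (gam I) := fun u =>
    (integrable_finsetSum _ fun j _ => i1 u j).sub (i2 u)
  rw [integral_finsetSum _ fun u _ => i5 u]
  refine Finset.sum_nonpos fun u _ => ?_
  rw [integral_sub (integrable_finsetSum _ fun j _ => i1 u j) (i2 u),
    integral_finsetSum _ fun j _ => i1 u j, st2]
  simp only [st1]
  have bs : ∀ u' ω, |smx (X θ ω) u * smx (X θ ω) u' * (1 - r u u')| ≤ 1 * 1 * (1 + R) := by
    intro u' ω
    rw [abs_mul, abs_mul, abs_of_nonneg (smx_nonneg _ _), abs_of_nonneg (smx_nonneg _ _)]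
    refine mul_le_mul (mul_le_mul (smx_le_one _ _) (smx_le_one _ _) (smx_nonneg _ _) zero_le_one) ?_
      (abs_nonneg _) (by norm_num)
    refine (abs_sub _ _).trans ?_
    simpa using hR u u'
  have cc : ∀ u', Continuous fun ω => smx (X θ ω) u * smx (X θ ω) u' * (1 - r u u') := fun u' =>
    ((cs θ u).mul (cs θ u')).mul continuous_const
  have i3 : ∀ j, Integrable (fun ω => ∑ u', sc * (smx (X θ ω) u * smx (X θ ω) u' * (1 - r u u')
        * (grd κ (P θ u ω) j * grd κ (P θ u' ω) j))) (gam I) := fun j => by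
    refine integrable_finsetSum _ fun u' _ => Integrable.const_mul (bdd_int
      ((cc u').mul ((ck θ u j).mul (ck θ u' j))) (1 * 1 * (1 + R) * (C * C)) fun ω => ?_) _
    show |(smx (X θ ω) u * smx (X θ ω) u' * (1 - r u u')) * (grd κ (P θ u ω) j * grd κ (P θ u' ω) j)| ≤ _
    rw [abs_mul, abs_mul (grd κ _ j)]
    exact mul_le_mul (bs u' ω) (mul_le_mul (bk _ _ _ _) (bk _ _ _ _) (abs_nonneg _) hC) (by positivity)
      (by positivity)
  have i4 : Integrable (fun ω => ∑ u', sc * (smx (X θ ω) u * smx (X θ ω) u' * (1 - r u u') * C ^ 2))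
      (gam I) := by
    refine integrable_finsetSum _ fun u' _ => Integrable.const_mul (Integrable.mul_const (bdd_int
      (cc u') (1 * 1 * (1 + R)) (bs u')) _) _
  rw [← integral_finsetSum _ fun j _ => i3 j, ← integral_sub (integrable_finsetSum _ fun j _ => i3 j) i4]
  refine integral_nonpos fun ω => ?_
  show _ - _ ≤ (0 : ℝ)
  rw [Finset.sum_comm, ← Finset.sum_sub_distrib]
  refine Finset.sum_nonpos fun u' _ => ?_
  have e3 : ∑ j, sc * (smx (X θ ω) u * smx (X θ ω) u' * (1 - r u u')
        * (grd κ (P θ u ω) j * grd κ (P θ u' ω) j)) = sc * (smx (X θ ω) u * smx (X θ ω) u' * (1 - r u u')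
        * (grd κ (P θ u ω) ⬝ᵥ grd κ (P θ u' ω))) := by
    simp only [dotProduct, Finset.mul_sum]
  rw [e3, ← mul_sub, ← mul_sub]
  refine mul_nonpos_of_nonneg_of_nonpos hsc0 (mul_nonpos_of_nonneg_of_nonpos
    (mul_nonneg (mul_nonneg (smx_nonneg _ _) (smx_nonneg _ _)) (hr0 u u')) ?_)
  have := dot_le (grd κ (P θ u ω)) (grd κ (P θ u' ω))
  have h1 := grd_nrm hC hL hκ (P θ u ω)
  have h2 := grd_nrm hC hL hκ (P θ u' ω)
  have h3 := mul_le_mul h1 h2 (nrm_nonneg _) hC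
  nlinarith


noncomputable def mx (x : U → ℝ) : ℝ := Finset.univ.sup' Finset.univ_nonempty x

lemma le_mx (x : U → ℝ) (u : U) : x u ≤ mx x := Finset.le_sup' x (Finset.mem_univ u)
lemma mx_le {x : U → ℝ} {M : ℝ} (h : ∀ u, x u ≤ M) : mx x ≤ M := Finset.sup'_le _ _ fun u _ => h u
lemma lt_mx {x : U → ℝ} {M : ℝ} : M < mx x ↔ ∃ u, M < x u := by
  unfold mx; simp [Finset.lt_sup'_iff]
lemma mx_cont : Continuous (mx : (U → ℝ) → ℝ) := by
  unfold mx
  exact Continuous.finset_sup'_apply _ fun u _ => continuous_apply u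

lemma XX_cont {a : U → J → I → ℝ} {h : J → I → ℝ}
    {g d : U → I → ℝ} {κ : (J → ℝ) → ℝ} (C : ℝ) (cκ : Continuous κ) (θ : ℝ) :
    Continuous (XX κ C a h g d θ) := by
  refine continuous_pi fun u => ?_
  have := dot_cont (g u)
  have := dot_cont (d u)
  exact ((cκ.comp (PP_cont a h θ u)).add (by fun_prop)).add (by fun_prop)

lemma abs_mx_le (x : U → ℝ) : |mx x| ≤ ∑ u, |x u| := by
  have hs : ∀ u, |x u| ≤ ∑ u, |x u| := fun u =>
    Finset.single_le_sum (f := fun u => |x u|) (fun _ _ => abs_nonneg _) (Finset.mem_univ u)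
  rw [abs_le']
  constructor
  · exact mx_le fun u => (le_abs_self _).trans (hs u)
  · obtain ⟨u⟩ := ‹Nonempty U›
    have := le_mx x u
    have := neg_abs_le (x u)
    have := hs u
    linarith

lemma mx_int {a : U → J → I → ℝ} {h : J → I → ℝ}
    {g d : U → I → ℝ} {κ : (J → ℝ) → ℝ} {C : ℝ}
    (hC : 0 ≤ C) (hL : Lip C κ) (θ : ℝ) :
    Integrable (fun ω => mx (XX κ C a h g d θ ω)) (gam I) :=
  Integrable.mono' (integrable_finsetSum Finset.univ fun u _ => (XX_int hC hL θ u).abs)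
    (mx_cont.comp (XX_cont C hL.cont θ)).aestronglyMeasurable
    (Filter.Eventually.of_forall fun ω => abs_mx_le _)

lemma lse_int {a : U → J → I → ℝ} {h : J → I → ℝ}
    {g d : U → I → ℝ} {κ : (J → ℝ) → ℝ} {C : ℝ}
    (hC : 0 ≤ C) (hL : Lip C κ) (θ : ℝ) :
    Integrable (fun ω => lse (XX κ C a h g d θ ω)) (gam I) :=
  Integrable.mono' ((integrable_finsetSum Finset.univ fun u _ => (XX_int hC hL θ u).abs).add
    (integrable_const (Real.log (Fintype.card U))))
    (lse_cont.comp (XX_cont C hL.cont θ)).aestronglyMeasurable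
    (Filter.Eventually.of_forall fun ω => abs_lse_le _)

lemma cmp_lse {r : U → U → ℝ} {a : U → J → I → ℝ} {h : J → I → ℝ}
    {g d : U → I → ℝ} (cfg : Cfg r a h g d) {κ : (J → ℝ) → ℝ} (hκ : ContDiff ℝ 1 κ) {C : ℝ}
    (hC : 0 ≤ C) (hL : Lip C κ) :
    ∫ ω, lse (XX κ C a h g d (Real.pi / 2) ω) ∂(gam I) ≤ ∫ ω, lse (XX κ C a h g d 0 ω) ∂(gam I) := by
  have hp : (0 : ℝ) ≤ Real.pi / 2 := by positivity
  choose! D hD hd using cmp_deriv_nonpos cfg hκ hC hL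
  have := antitoneOn_of_deriv_nonpos (convex_Icc 0 (Real.pi / 2))
    (f := fun θ => ∫ ω, lse (XX κ C a h g d θ ω) ∂(gam I))
    (fun θ hθ => (hd θ hθ).continuousAt.continuousWithinAt)
    (fun θ hθ => (hd θ (interior_subset hθ)).differentiableAt.differentiableWithinAt)
    (fun θ hθ => by rw [(hd θ (interior_subset hθ)).deriv]; exact hD θ (interior_subset hθ))
  exact this (Set.left_mem_Icc.2 hp) (Set.right_mem_Icc.2 hp) hp

lemma gcmp {r : U → U → ℝ} {a : U → J → I → ℝ} {h : J → I → ℝ}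
    {g d : U → I → ℝ} (cfg : Cfg r a h g d) {κ : (J → ℝ) → ℝ} {C : ℝ}
    (hC : 0 ≤ C) (hL : Lip C κ) :
    ∫ ω, mx (XX κ C a h g d (Real.pi / 2) ω) ∂(gam I) ≤ ∫ ω, mx (XX κ C a h g d 0 ω) ∂(gam I) := by
  set l := Real.log (Fintype.card U) with hl
  have hl0 : 0 ≤ l := Real.log_natCast_nonneg _
  have key : ∀ ε : ℝ, 0 < ε → ∫ ω, mx (XX κ C a h g d (Real.pi / 2) ω) ∂(gam I)
      ≤ (∫ ω, mx (XX κ C a h g d 0 ω) ∂(gam I)) + ε * (2 + l) := by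
    intro ε hε
    obtain ⟨G, hG1, hG2, hG3⟩ := mollify hL hε
    set β := ε⁻¹ with hβ
    have hβ0 : 0 < β := inv_pos.2 hε
    have cfg' : Cfg r a h g (fun u => β • d u) :=
      { cfg with
        da := fun u u' j => by simp [cfg.da]
        dh := fun u j => by simp [cfg.dh]
        dg := fun u j => by simp [cfg.dg] }
    have hL' : Lip (β * C) (fun x => β * G x) := fun x y => by
      rw [← mul_sub, abs_mul, abs_of_pos hβ0, mul_assoc]
      exact mul_le_mul_of_nonneg_left (hG2 x y) hβ0.le
    have hC' : 0 ≤ β * C := by positivity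
    have hmain := cmp_lse cfg' (contDiff_const.mul hG1) hC' hL'
    have hsc : ∀ θ ω u, XX (fun x => β * G x) (β * C) a h g (fun u => β • d u) θ ω u
        = β * XX G C a h g d θ ω u := fun θ ω u => by
      simp only [XX, smul_dotProduct, smul_eq_mul]; ring
    have hcl : ∀ θ ω u, |XX G C a h g d θ ω u - XX κ C a h g d θ ω u| ≤ ε := fun θ ω u => by
      have := hG3 (PP a h θ u ω)
      simp only [XX]
      convert this using 2; ring
    have hεβ : ε * β = 1 := mul_inv_cancel₀ hε.ne'
    have h1 : ∫ ω, mx (XX κ C a h g d (Real.pi / 2) ω) ∂(gam I) ≤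
        ∫ ω, (ε * lse (XX (fun x => β * G x) (β * C) a h g (fun u => β • d u) (Real.pi / 2) ω) + ε)
          ∂(gam I) := by
      refine integral_mono (mx_int hC hL _) (((lse_int hC' hL' _).const_mul ε).add
        (integrable_const ε)) fun ω => mx_le fun u => ?_
      have h1 := le_lse (XX (fun x => β * G x) (β * C) a h g (fun u => β • d u) (Real.pi / 2) ω) u
      have h2 := (abs_le.1 (hcl (Real.pi / 2) ω u)).1
      rw [hsc] at h1
      have h3 := mul_le_mul_of_nonneg_left h1 hε.le
      rw [← mul_assoc, hεβ, one_mul] at h3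
      show _ ≤ ε * _ + ε
      linarith
    have h2 : ∫ ω, (ε * lse (XX (fun x => β * G x) (β * C) a h g (fun u => β • d u) 0 ω))
          ∂(gam I) ≤ ∫ ω, (mx (XX κ C a h g d 0 ω) + ε * (1 + l)) ∂(gam I) := by
      refine integral_mono ((lse_int hC' hL' _).const_mul ε) ((mx_int hC hL _).add
        (integrable_const _)) fun ω => ?_
      have h1 := lse_le (XX (fun x => β * G x) (β * C) a h g (fun u => β • d u) 0 ω)
        (β * (mx (XX κ C a h g d 0 ω) + ε)) fun u => by
          rw [hsc]
          refine mul_le_mul_of_nonneg_left ?_ hβ0.le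
          have := le_mx (XX κ C a h g d 0 ω) u
          have h2 := (abs_le.1 (hcl 0 ω u)).2
          linarith
      have h3 := mul_le_mul_of_nonneg_left h1 hε.le
      rw [mul_add, ← mul_assoc, hεβ, one_mul] at h3
      show ε * _ ≤ _ + ε * (1 + l)
      linarith
    rw [integral_add ((lse_int hC' hL' _).const_mul ε) (integrable_const ε), integral_const_mul] at h1
    rw [integral_add (mx_int hC hL _) (integrable_const _), integral_const_mul] at h2
    simp only [integral_const, probReal_univ, one_smul] at h1 h2
    have := mul_le_mul_of_nonneg_left hmain hε.le
    linarith
  refine le_of_forall_pos_le_add fun δ hδ => ?_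
  have := key (δ / (2 + l)) (by positivity)
  rwa [div_mul_cancel₀ _ (by positivity)] at this

end


section
variable {m n : ℕ}

def feas (ν : ℝ) (lam : Fin n → ℝ) : Prop := 0 ≤ ν ∧ ∀ i, 0 ≤ lam i ∧ lam i ≤ 2 * ν

noncomputable def kset (k : ℕ) (C : ℝ) (xt h : Fin n → ℝ) : Set ℝ :=
  {z : ℝ | ∃ ν : ℝ, ∃ lam : Fin n → ℝ, feas ν lam ∧
    z = - C * nrm (fun i => h i + ν - lam i) - tailSum k lam xt}

noncomputable def kap (k : ℕ) (C : ℝ) (xt h : Fin n → ℝ) : ℝ := sSup (kset k C xt h)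

lemma tailSum_eq {k : ℕ} {xt : Fin n → ℝ} (hxt : kSparseNonneg n k xt) (lam : Fin n → ℝ) :
    tailSum k lam xt = ∑ i, lam i * xt i := by
  unfold tailSum
  rw [Finset.sum_filter]
  refine Finset.sum_congr rfl fun i _ => ?_
  split_ifs with hi
  · rfl
  · rw [hxt.1 i (by omega), mul_zero]

lemma tailSum_nonneg {k : ℕ} {xt : Fin n → ℝ} (hxt : kSparseNonneg n k xt) {lam : Fin n → ℝ}
    {ν : ℝ} (hl : feas ν lam) : 0 ≤ tailSum k lam xt := by
  rw [tailSum_eq hxt]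
  exact Finset.sum_nonneg fun i _ => mul_nonneg (hl.2 i).1 (hxt.2 i)

lemma kset_ne (k : ℕ) (C : ℝ) (xt h : Fin n → ℝ) : (kset k C xt h).Nonempty :=
  ⟨_, 0, 0, ⟨le_rfl, fun i => by simp⟩, rfl⟩

lemma kset_bdd {k : ℕ} {C : ℝ} (hC : 0 ≤ C) {xt : Fin n → ℝ} (hxt : kSparseNonneg n k xt)
    (h : Fin n → ℝ) : BddAbove (kset k C xt h) := by
  refine ⟨0, ?_⟩
  rintro z ⟨ν, lam, hl, rfl⟩
  have := tailSum_nonneg hxt hl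
  have := mul_nonneg hC (nrm_nonneg (fun i => h i + ν - lam i))
  linarith

lemma le_kap {k : ℕ} {C : ℝ} (hC : 0 ≤ C) {xt : Fin n → ℝ} (hxt : kSparseNonneg n k xt)
    (h : Fin n → ℝ) {ν : ℝ} {lam : Fin n → ℝ} (hl : feas ν lam) :
    - C * nrm (fun i => h i + ν - lam i) - tailSum k lam xt ≤ kap k C xt h :=
  le_csSup (kset_bdd hC hxt h) ⟨ν, lam, hl, rfl⟩

lemma kap_le {k : ℕ} {C : ℝ} {xt h : Fin n → ℝ} {M : ℝ}
    (H : ∀ ν lam, feas ν lam → - C * nrm (fun i => h i + ν - lam i) - tailSum k lam xt ≤ M) :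
    kap k C xt h ≤ M :=
  csSup_le (kset_ne k C xt h) (by rintro z ⟨ν, lam, hl, rfl⟩; exact H ν lam hl)

lemma kap_lip {k : ℕ} {C : ℝ} (hC : 0 ≤ C) {xt : Fin n → ℝ} (hxt : kSparseNonneg n k xt) :
    Lip C (kap k C xt) := by
  have key : ∀ x y, kap k C xt x ≤ kap k C xt y + C * nrm (x - y) := by
    intro x y
    refine kap_le fun ν lam hl => ?_
    have h1 := le_kap hC hxt y hl
    have h2 : nrm (fun i => y i + ν - lam i) ≤ nrm (fun i => x i + ν - lam i) + nrm (x - y) := by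
      have h3 := nrm_add (fun i => x i + ν - lam i) ((-1 : ℝ) • (x - y))
      rw [nrm_smul] at h3
      have e : (fun i => x i + ν - lam i) + (-1 : ℝ) • (x - y) = fun i => y i + ν - lam i := by
        funext i; simp; ring
      rw [e] at h3
      simpa using h3
    nlinarith
  intro x y
  have e : nrm (y - x) = nrm (x - y) := by
    have := nrm_smul (-1) (x - y)
    simpa using this
  have h1 := key x y
  have h2 := key y x
  rw [e] at h2
  rw [abs_le]; constructor <;> linarith

lemma xi_eq {k : ℕ} {σ C : ℝ} (hC : 0 ≤ C) {xt : Fin n → ℝ} (hxt : kSparseNonneg n k xt)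
    (p : (Fin m → ℝ) × (Fin n → ℝ)) :
    xiUpFun m n k σ C xt p = Real.sqrt (C ^ 2 + σ ^ 2) * nrm p.1 + kap k C xt p.2 := by
  unfold xiUpFun
  apply le_antisymm
  · refine csSup_le ⟨_, 0, 0, le_rfl, fun i => by simp, rfl⟩ ?_
    rintro z ⟨ν, lam, hν, hl, rfl⟩
    have := le_kap hC hxt p.2 (ν := ν) (lam := lam) ⟨hν, hl⟩
    show _ * nrm p.1 - C * nrm _ - _ ≤ _
    linarith
  · rw [← le_sub_iff_add_le']
    refine kap_le fun ν lam hl => ?_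
    rw [le_sub_iff_add_le']
    refine le_csSup ⟨Real.sqrt (C ^ 2 + σ ^ 2) * nrm p.1 + kap k C xt p.2, ?_⟩ ⟨ν, lam, hl.1, hl.2, ?_⟩
    · rintro z ⟨ν, lam, hν, hl, rfl⟩
      have := le_kap hC hxt p.2 (ν := ν) (lam := lam) ⟨hν, hl⟩
      show _ * nrm p.1 - C * nrm _ - _ ≤ _
      linarith
    · show _ = _ * nrm p.1 - C * nrm _ - _
      ring

lemma abs_le_nrm {I : Type} [Fintype I] (x : I → ℝ) (i : I) : |x i| ≤ nrm x := by
  rw [← Real.sqrt_sq_eq_abs]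
  exact Real.sqrt_le_sqrt (Finset.single_le_sum (f := fun i => x i ^ 2)
    (fun i _ => sq_nonneg _) (Finset.mem_univ i))

lemma dot_self {I : Type} [Fintype I] (x : I → ℝ) : x ⬝ᵥ x = nrm x ^ 2 := by
  rw [nrm_sq]; simp [dotProduct, sq]

noncomputable def lag (A : Fin m → Fin n → ℝ) (v : Fin m → ℝ) (xt w : Fin n → ℝ)
    (y : (Fin m → ℝ) × ℝ × (Fin n → ℝ)) : ℝ :=
  ∑ i, y.1 i * ((∑ j, A i j * w j) - v i) + ∑ j, (y.2.1 - y.2.2 j) * w j - ∑ j, y.2.2 j * xt j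

lemma lag_eq (A : Fin m → Fin n → ℝ) (v : Fin m → ℝ) (xt w : Fin n → ℝ)
    (y : (Fin m → ℝ) × ℝ × (Fin n → ℝ)) :
    lag A v xt w y = (fun j => (∑ i, y.1 i * A i j) + y.2.1 - y.2.2 j) ⬝ᵥ w - y.1 ⬝ᵥ v
      - ∑ j, y.2.2 j * xt j := by
  unfold lag dotProduct
  simp only [mul_sub, Finset.mul_sum, Finset.sum_sub_distrib, sub_mul, add_mul, Finset.sum_mul,
    Finset.sum_add_distrib]
  rw [Finset.sum_comm]
  simp only [mul_assoc]
  ring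

lemma lag_affx (A : Fin m → Fin n → ℝ) (v : Fin m → ℝ) (xt w w' : Fin n → ℝ)
    (y : (Fin m → ℝ) × ℝ × (Fin n → ℝ)) (a b : ℝ) (hab : a + b = 1) :
    lag A v xt (a • w + b • w') y = a * lag A v xt w y + b * lag A v xt w' y := by
  have hb : b = 1 - a := by linarith
  subst hb
  simp only [lag_eq, dotProduct_add, dotProduct_smul, smul_eq_mul]
  ring

lemma lag_affy (A : Fin m → Fin n → ℝ) (v : Fin m → ℝ) (xt w : Fin n → ℝ)
    (y y' : (Fin m → ℝ) × ℝ × (Fin n → ℝ)) (a b : ℝ) :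
    lag A v xt w (a • y + b • y') = a * lag A v xt w y + b * lag A v xt w y' := by
  unfold lag
  simp only [mul_add, mul_sub, Finset.mul_sum, Prod.fst_add, Prod.snd_add, Prod.smul_fst, Prod.smul_snd,
    Pi.add_apply, Pi.smul_apply, smul_eq_mul, Finset.sum_add_distrib, Finset.sum_sub_distrib, add_mul,
    sub_mul, mul_assoc]
  ring


lemma ball_compact (C : ℝ) : IsCompact {w : Fin n → ℝ | nrm w ≤ C} := by
  refine Metric.isCompact_of_isClosed_isBounded (isClosed_le nrm_cont continuous_const) ?_
  refine (Metric.isBounded_closedBall (x := (0 : Fin n → ℝ)) (r := C)).subset fun w hw => ?_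
  rw [mem_closedBall_zero_iff]
  have h0 : 0 ≤ C := (nrm_nonneg w).trans hw
  rw [pi_norm_le_iff_of_nonneg h0]
  exact fun i => (abs_le_nrm w i).trans hw

lemma ball_convex {I : Type} [Fintype I] (C : ℝ) : Convex ℝ {w : I → ℝ | nrm w ≤ C} := by
  intro x hx y hy a b ha hb hab
  refine (nrm_add _ _).trans ?_
  rw [nrm_smul, nrm_smul, abs_of_nonneg ha, abs_of_nonneg hb]
  have hx' : nrm x ≤ C := hx
  have hy' : nrm y ≤ C := hy
  calc a * nrm x + b * nrm y ≤ a * C + b * C := by gcongr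
    _ = C := by rw [← add_mul, hab, one_mul]

lemma dual_pt {t : ℝ} {xt : Fin n → ℝ} (ht : 0 ≤ t) (hxt0 : ∀ i, 0 ≤ xt i)
    {ω : (Fin m → Fin n → ℝ) × (Fin m → ℝ)} (hz : t < zetaObj m n xt ω) (w : Fin n → ℝ) :
    ∃ y : (Fin m → ℝ) × ℝ × (Fin n → ℝ), nrm y.1 ≤ 1 ∧ feas y.2.1 y.2.2 ∧ t < lag ω.1 ω.2 xt w y := by
  by_cases hf : l1norm (xt + w) ≤ l1norm xt
  · set z : Fin m → ℝ := fun i => (∑ j, ω.1 i j * w j) - ω.2 i with hzd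
    have h1 : zetaObj m n xt ω ≤ lassoVal m n xt ω (xt + w) := by
      refine csInf_le ⟨0, ?_⟩ ⟨xt + w, hf, rfl⟩
      rintro r ⟨x, _, rfl⟩
      exact Real.sqrt_nonneg _
    have h2 : lassoVal m n xt ω (xt + w) = nrm z := by
      unfold lassoVal e2norm nrm
      congr 1
      refine Finset.sum_congr rfl fun i _ => ?_
      simp only [hzd, Pi.add_apply, mul_add, Finset.sum_add_distrib]
      ring
    have h3 : t < nrm z := by rw [← h2]; exact hz.trans_le h1
    have h4 : 0 < nrm z := ht.trans_lt h3
    refine ⟨((nrm z)⁻¹ • z, 0, 0), ?_, ⟨le_rfl, fun i => by simp⟩, ?_⟩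
    · rw [nrm_smul, abs_of_pos (inv_pos.2 h4), inv_mul_cancel₀ h4.ne']
    · have : lag ω.1 ω.2 xt w ((nrm z)⁻¹ • z, 0, 0) = ((nrm z)⁻¹ • z) ⬝ᵥ z := by
        simp [lag, dotProduct, hzd]
      rw [this, smul_dotProduct, dot_self, smul_eq_mul, sq, inv_mul_cancel_left₀ h4.ne']
      exact h3
  · push Not at hf
    set gp := l1norm (xt + w) - l1norm xt with hgp
    have hg0 : 0 < gp := by linarith
    set ν := (t + 1) / gp with hν
    have hν0 : 0 ≤ ν := by positivity
    refine ⟨(0, ν, fun j => if xt j + w j < 0 then 2 * ν else 0), by rw [nrm_zero]; exact zero_le_one,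
      ⟨hν0, fun i => ?_⟩, ?_⟩
    · dsimp only; split_ifs <;> constructor <;> linarith
    · have : lag ω.1 ω.2 xt w (0, ν, fun j => if xt j + w j < 0 then 2 * ν else 0) = ν * gp := by
        simp only [lag, Pi.zero_apply, zero_mul, Finset.sum_const_zero, zero_add, hgp, l1norm]
        rw [← Finset.sum_sub_distrib, ← Finset.sum_sub_distrib, Finset.mul_sum]
        refine Finset.sum_congr rfl fun j _ => ?_
        rw [Pi.add_apply, abs_of_nonneg (hxt0 j)]
        split_ifs with hj
        · rw [abs_of_neg hj]; ring
        · rw [abs_of_nonneg (not_lt.1 hj)]; ring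
      rw [this, hν, div_mul_cancel₀ _ hg0.ne']
      linarith

lemma lag_contx (A : Fin m → Fin n → ℝ) (v : Fin m → ℝ) (xt : Fin n → ℝ)
    (y : (Fin m → ℝ) × ℝ × (Fin n → ℝ)) : Continuous fun w => lag A v xt w y := by
  unfold lag; fun_prop

lemma lag_conty (A : Fin m → Fin n → ℝ) (v : Fin m → ℝ) (xt w : Fin n → ℝ) :
    Continuous fun y => lag A v xt w y := by
  unfold lag; fun_prop

lemma dual {k : ℕ} {C t : ℝ} (hC : 0 ≤ C) {xt : Fin n → ℝ} (hxt : kSparseNonneg n k xt) (ht : 0 ≤ t)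
    {ω : (Fin m → Fin n → ℝ) × (Fin m → ℝ)} (hz : t < zetaObj m n xt ω) :
    ∃ u : Fin m → ℝ, nrm u = 1 ∧ t < kap k C xt (fun j => ∑ i, u i * ω.1 i j) - u ⬝ᵥ ω.2 := by
  set X := {w : Fin n → ℝ | nrm w ≤ C} with hX
  set Y := {y : (Fin m → ℝ) × ℝ × (Fin n → ℝ) | nrm y.1 ≤ 1 ∧ feas y.2.1 y.2.2} with hY
  have cX : Convex ℝ X := ball_convex C
  have cY : Convex ℝ Y := by
    intro x hx y hy a b ha hb hab
    refine ⟨ball_convex 1 hx.1 hy.1 ha hb hab, ?_, fun i => ⟨?_, ?_⟩⟩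
    · exact add_nonneg (mul_nonneg ha hx.2.1) (mul_nonneg hb hy.2.1)
    · exact add_nonneg (mul_nonneg ha (hx.2.2 i).1) (mul_nonneg hb (hy.2.2 i).1)
    · show a * x.2.2 i + b * y.2.2 i ≤ 2 * (a * x.2.1 + b * y.2.1)
      have := mul_le_mul_of_nonneg_left (hx.2.2 i).2 ha
      have := mul_le_mul_of_nonneg_left (hy.2.2 i).2 hb
      linarith
  have kX : IsCompact X := ball_compact C
  choose y hy1 hy2 hy3 using fun w => dual_pt (xt := xt) ht hxt.2 hz w
  obtain ⟨T, hT⟩ := kX.elim_finite_subcover (fun w => {w' | t < lag ω.1 ω.2 xt w' (y w)})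
    (fun w => isOpen_lt continuous_const (lag_contx _ _ _ _))
    (fun w _ => Set.mem_iUnion.2 ⟨w, hy3 w⟩)
  obtain ⟨y0, hy0, H⟩ := Sion.exists_lt_iInf_of_lt_iInf_of_finite (X := X) (Y := Y)
    (f := fun w y => lag ω.1 ω.2 xt w y) ⟨0, by rw [hX]; show nrm 0 ≤ C; rw [nrm_zero]; exact hC⟩ kX
    (fun y _ => (lag_contx _ _ _ y).lowerSemicontinuous.lowerSemicontinuousOn _)
    (fun y _ => ConvexOn.quasiconvexOn ⟨cX, fun x _ x' _ a b _ _ hab =>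
      (lag_affx _ _ _ x x' y a b hab).le⟩) cY
    (fun w _ => (lag_conty _ _ _ w).upperSemicontinuous.upperSemicontinuousOn _)
    (fun w _ => ConcaveOn.quasiconcaveOn ⟨cY, fun x _ x' _ a b _ _ _ =>
      (lag_affy _ _ _ w x x' a b).ge⟩) cX (s := y '' T) (T.finite_toSet.image y)
    (by rintro _ ⟨w, _, rfl⟩; exact ⟨hy1 w, hy2 w⟩) (t := t)
    (fun x hx => by
      obtain ⟨w, hw⟩ := Set.mem_iUnion.1 (hT hx)
      obtain ⟨hwT, hw'⟩ := Set.mem_iUnion.1 hw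
      exact ⟨y w, ⟨w, hwT, rfl⟩, hw'⟩)
  obtain ⟨u, ν, lam⟩ := y0
  set b : Fin n → ℝ := fun j => (∑ i, u i * ω.1 i j) + ν - lam j with hb
  have hw : t < - (C * nrm b) - u ⬝ᵥ ω.2 - ∑ j, lam j * xt j := by
    have h1 := H ((-(C / nrm b)) • b) (by
      show nrm _ ≤ C
      rw [nrm_smul, abs_neg, abs_of_nonneg (div_nonneg hC (nrm_nonneg _))]
      by_cases h0 : nrm b = 0
      · rw [h0]; simpa using hC
      · rw [div_mul_cancel₀ _ h0])
    rw [lag_eq] at h1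
    have h2 : b ⬝ᵥ ((-(C / nrm b)) • b) = -(C * nrm b) := by
      rw [dotProduct_smul, dot_self, smul_eq_mul]
      by_cases h0 : nrm b = 0
      · rw [h0]; simp
      · field_simp
    simp only [← hb] at h1
    rwa [h2] at h1
  have hf : feas ν lam := hy0.2
  have hu1 : nrm u ≤ 1 := hy0.1
  have hu0 : 0 < nrm u := by
    rcases (nrm_nonneg u).eq_or_lt with h0 | h0
    · exfalso
      have h1 := abs_dot_le u ω.2
      rw [← h0, zero_mul] at h1
      have h2 := (abs_le.1 h1).1
      have h3 := mul_nonneg hC (nrm_nonneg b)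
      have h4 : 0 ≤ ∑ j, lam j * xt j := Finset.sum_nonneg fun i _ => mul_nonneg (hf.2 i).1 (hxt.2 i)
      linarith
    · exact h0
  set s := (nrm u)⁻¹ with hs
  have hs1 : 1 ≤ s := (one_le_inv₀ hu0).2 hu1
  have hs0 : 0 < s := by positivity
  refine ⟨s • u, ?_, ?_⟩
  · rw [nrm_smul, abs_of_pos hs0, hs, inv_mul_cancel₀ hu0.ne']
  · have hf' : feas (s * ν) (s • lam) := ⟨mul_nonneg hs0.le hf.1, fun i => ⟨mul_nonneg hs0.le (hf.2 i).1, by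
      have := mul_le_mul_of_nonneg_left (hf.2 i).2 hs0.le
      show s * lam i ≤ _
      linarith⟩⟩
    have h1 := le_kap hC hxt (fun j => ∑ i, (s • u) i * ω.1 i j) hf'
    have h2 : (fun j => (∑ i, (s • u) i * ω.1 i j) + s * ν - (s • lam) j) = s • b := by
      funext j
      simp only [hb, Pi.smul_apply, smul_eq_mul, mul_sub, mul_add, Finset.mul_sum, mul_assoc]
    have h3 : ∑ j, (s • lam) j * xt j = s * ∑ j, lam j * xt j := by
      simp only [Pi.smul_apply, smul_eq_mul, Finset.mul_sum, mul_assoc]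
    rw [h2, nrm_smul, abs_of_pos hs0, tailSum_eq hxt, h3] at h1
    rw [smul_dotProduct, smul_eq_mul]
    have h4 := mul_lt_mul_of_pos_left hw hs0
    nlinarith

end


set_option linter.unusedSectionVars false
section
variable {U M J : Type} [Fintype U] [Nonempty U] [Fintype M] [Fintype J] [DecidableEq J] [DecidableEq M]

noncomputable def ca (e : U → M → ℝ) (u : U) (j : J) : (M × J) ⊕ (J ⊕ M) → ℝ :=
  Sum.elim (fun p => if p.2 = j then e u p.1 else 0) 0
noncomputable def ch (M : Type) (j : J) : (M × J) ⊕ (J ⊕ M) → ℝ :=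
  Sum.elim 0 (Sum.elim (Pi.single j 1) 0)
noncomputable def cg (J : Type) (e : U → M → ℝ) (u : U) : (M × J) ⊕ (J ⊕ M) → ℝ :=
  Sum.elim 0 (Sum.elim 0 (e u))

lemma ca_dot (e : U → M → ℝ) (u : U) (j : J) (ω : (M × J) ⊕ (J ⊕ M) → ℝ) :
    ca e u j ⬝ᵥ ω = ∑ i, e u i * ω (Sum.inl (i, j)) := by
  simp [ca, dotProduct, Fintype.sum_sum_type, Fintype.sum_prod_type]
lemma ch_dot (j : J) (ω : (M × J) ⊕ (J ⊕ M) → ℝ) :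
    ch M j ⬝ᵥ ω = ω (Sum.inr (Sum.inl j)) := by
  simp [ch, dotProduct, Fintype.sum_sum_type, Pi.single_apply]
lemma cg_dot (e : U → M → ℝ) (u : U) (ω : (M × J) ⊕ (J ⊕ M) → ℝ) :
    cg J e u ⬝ᵥ ω = ∑ i, e u i * ω (Sum.inr (Sum.inr i)) := by
  simp [cg, dotProduct, Fintype.sum_sum_type]

lemma ccfg (e : U → M → ℝ) (he : ∀ u, nrm (e u) = 1) :
    Cfg (fun u u' => e u ⬝ᵥ e u') (ca (J := J) e) (ch M) (cg J e) (fun _ => 0) where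
  aa u u' j j' := by
    rw [ca_dot]; simp only [ca, Sum.elim_inl, dotProduct]
    split_ifs <;> simp
  hh j j' := by
    rw [ch_dot]; simp [ch, Pi.single_apply]
  ah u j j' := by rw [ca_dot]; simp [ch]
  gg u u' := by rw [cg_dot]; simp [cg, dotProduct]
  ga u u' j := by rw [cg_dot]; simp [ca]
  gh u j := by rw [cg_dot]; simp [ch]
  da := by simp
  dh := by simp
  dg := by simp
  r1 u := by rw [dot_self, he]; norm_num
  rle u u' := (dot_le _ _).trans (by rw [he, he, one_mul])
  rsymm u u' := dotProduct_comm _ _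

lemma chevet {κ : (J → ℝ) → ℝ} {L : ℝ} (hL0 : 0 ≤ L) (hL : Lip L κ) (e : U → M → ℝ)
    (he : ∀ u, nrm (e u) = 1) :
    ∫ ω, mx (fun u => κ (fun j => ∑ i, e u i * ω (i, j))) ∂(gam (M × J))
      ≤ (∫ x, κ x ∂(gam J)) + L * ∫ x, nrm x ∂(gam M) := by
  have h := gcmp (ccfg (J := J) e he) hL0 hL
  have e1 : ∀ ω : (M × J) ⊕ (J ⊕ M) → ℝ, XX κ L (ca (J := J) e) (ch M) (cg J e) (fun _ => 0) (Real.pi / 2) ω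
      = fun u => κ (fun j => ∑ i, e u i * ω (Sum.inl (i, j))) := fun ω => by
    funext u
    have hP : PP (ca (J := J) e) (ch M) (Real.pi / 2) u ω = fun j => ∑ i, e u i * ω (Sum.inl (i, j)) := by
      funext j; simp [PP, ca_dot]
    simp [XX, hP]
  have e0 : ∀ ω : (M × J) ⊕ (J ⊕ M) → ℝ, mx (XX κ L (ca (J := J) e) (ch M) (cg J e) (fun _ => 0) 0 ω)
      ≤ κ (fun j => ω (Sum.inr (Sum.inl j))) + L * nrm (fun i => ω (Sum.inr (Sum.inr i))) := fun ω => by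
    refine mx_le fun u => ?_
    have hP : PP (ca (J := J) e) (ch M) 0 u ω = fun j => ω (Sum.inr (Sum.inl j)) := by
      funext j; simp [PP, ch_dot]
    simp only [XX, hP, cg_dot, Real.cos_zero]
    have := dot_le (e u) (fun i => ω (Sum.inr (Sum.inr i)))
    rw [he, one_mul] at this
    have := mul_le_mul_of_nonneg_left this hL0
    simpa [dotProduct] using this
  have p1 := (measurePreserving_fst (μ := gam (M × J)) (ν := gam (J ⊕ M))).comp (gam_sum _ _)
  have p2 := (measurePreserving_snd (μ := gam (M × J)) (ν := gam (J ⊕ M))).comp (gam_sum _ _)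
  have p3 := ((measurePreserving_fst (μ := gam J) (ν := gam M)).comp (gam_sum _ _)).comp p2
  have p4 := ((measurePreserving_snd (μ := gam J) (ν := gam M)).comp (gam_sum _ _)).comp p2
  have ck := hL.cont
  have cF : Continuous fun ω : M × J → ℝ => mx (fun u => κ (fun j => ∑ i, e u i * ω (i, j))) :=
    mx_cont.comp (continuous_pi fun u => ck.comp (by fun_prop))
  have h1 : ∫ ω, mx (fun u => κ (fun j => ∑ i, e u i * ω (i, j))) ∂(gam (M × J))
      = ∫ ω, mx (XX κ L (ca (J := J) e) (ch M) (cg J e) (fun _ => 0) (Real.pi / 2) ω) ∂(gam _) := by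
    rw [← p1.map_eq, integral_map p1.measurable.aemeasurable cF.aestronglyMeasurable]
    simp only [e1]; rfl
  have i3 : Integrable (fun ω : (M × J) ⊕ (J ⊕ M) → ℝ => κ (fun j => ω (Sum.inr (Sum.inl j)))) (gam _) :=
    (p3.integrable_comp ck.aestronglyMeasurable).2 hL.int
  have i4 : Integrable (fun ω : (M × J) ⊕ (J ⊕ M) → ℝ => nrm (fun i => ω (Sum.inr (Sum.inr i)))) (gam _) :=
    (p4.integrable_comp nrm_cont.aestronglyMeasurable).2 gam_int_nrm
  have h3 : ∫ ω : (M × J) ⊕ (J ⊕ M) → ℝ, κ (fun j => ω (Sum.inr (Sum.inl j))) ∂(gam _) = ∫ x, κ x ∂(gam J) := by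
    rw [← p3.map_eq, integral_map p3.measurable.aemeasurable ck.aestronglyMeasurable]; rfl
  have h4 : ∫ ω : (M × J) ⊕ (J ⊕ M) → ℝ, nrm (fun i => ω (Sum.inr (Sum.inr i))) ∂(gam _)
      = ∫ x, nrm x ∂(gam M) := by
    rw [← p4.map_eq, integral_map p4.measurable.aemeasurable nrm_cont.aestronglyMeasurable]; rfl
  rw [h1]
  refine h.trans ((integral_mono (mx_int hL0 hL 0) (i3.add (i4.const_mul L)) e0).trans (le_of_eq ?_))
  change ∫ ω : (M × J) ⊕ (J ⊕ M) → ℝ, (κ (fun j => ω (Sum.inr (Sum.inl j)))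
    + L * nrm (fun i => ω (Sum.inr (Sum.inr i)))) ∂(gam _) = _
  rw [integral_add i3 (i4.const_mul L), integral_const_mul, h3, h4]

lemma F_lip {κ : (J → ℝ) → ℝ} {L : ℝ} (hL0 : 0 ≤ L) (hL : Lip L κ) (e : U → M → ℝ)
    (he : ∀ u, nrm (e u) = 1) :
    Lip L (fun ω : M × J → ℝ => mx (fun u => κ (fun j => ∑ i, e u i * ω (i, j)))) := by
  have h1 : ∀ u (ω : M × J → ℝ), nrm (fun j => ∑ i, e u i * ω (i, j)) ≤ nrm ω := by
    intro u ω
    refine Real.sqrt_le_sqrt ?_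
    rw [Fintype.sum_prod_type_right]
    refine Finset.sum_le_sum fun j _ => ?_
    have h2 := abs_dot_le (e u) (fun i => ω (i, j))
    rw [he, one_mul] at h2
    have h3 := pow_le_pow_left₀ (abs_nonneg _) h2 2
    rw [sq_abs, nrm_sq] at h3
    exact h3
  have key : ∀ x y : M × J → ℝ, mx (fun u => κ (fun j => ∑ i, e u i * x (i, j)))
      ≤ mx (fun u => κ (fun j => ∑ i, e u i * y (i, j))) + L * nrm (x - y) := by
    intro x y
    refine mx_le fun u => ?_
    have h2 := le_mx (fun u => κ (fun j => ∑ i, e u i * y (i, j))) u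
    have h3 := (le_abs_self _).trans (hL (fun j => ∑ i, e u i * x (i, j)) (fun j => ∑ i, e u i * y (i, j)))
    have e4 : (fun j => ∑ i, e u i * x (i, j)) - (fun j => ∑ i, e u i * y (i, j))
        = fun j => ∑ i, e u i * (x - y) (i, j) := by
      funext j; simp [mul_sub]
    rw [e4] at h3
    have h4 := mul_le_mul_of_nonneg_left (h1 u (x - y)) hL0
    linarith
  intro x y
  have e : nrm (y - x) = nrm (x - y) := by
    have := nrm_smul (-1) (x - y)
    simpa using this
  have h1 := key x y
  have h2 := key y x
  rw [e] at h2
  rw [abs_le]; constructor <;> linarith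

end

section
variable {m n : ℕ}

noncomputable def kap2 (k : ℕ) (σ C : ℝ) (xt : Fin n → ℝ) (x : Fin n ⊕ Unit → ℝ) : ℝ :=
  kap k C xt (fun j => x (Sum.inl j)) - σ * x (Sum.inr ())

lemma kap2_lip {k : ℕ} {σ C : ℝ} (hσ : 0 ≤ σ) (hC : 0 ≤ C) {xt : Fin n → ℝ} (hxt : kSparseNonneg n k xt) :
    Lip (Real.sqrt (C ^ 2 + σ ^ 2)) (kap2 k σ C xt) := by
  intro x y
  have h1 := kap_lip hC hxt (fun j => x (Sum.inl j)) (fun j => y (Sum.inl j))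
  set a := nrm ((fun j => x (Sum.inl j)) - (fun j => y (Sum.inl j))) with ha
  set b := |x (Sum.inr ()) - y (Sum.inr ())| with hb
  have h2 : nrm (x - y) = Real.sqrt (a ^ 2 + b ^ 2) := by
    rw [ha, nrm_sq, hb, sq_abs]
    simp [nrm, Fintype.sum_sum_type]
  have h3 : |kap2 k σ C xt x - kap2 k σ C xt y| ≤ C * a + σ * b := by
    unfold kap2
    have : kap k C xt (fun j => x (Sum.inl j)) - σ * x (Sum.inr ()) -
        (kap k C xt (fun j => y (Sum.inl j)) - σ * y (Sum.inr ()))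
        = (kap k C xt (fun j => x (Sum.inl j)) - kap k C xt (fun j => y (Sum.inl j)))
        - σ * (x (Sum.inr ()) - y (Sum.inr ())) := by ring
    rw [this]
    refine (abs_sub _ _).trans (add_le_add h1 ?_)
    rw [abs_mul, abs_of_nonneg hσ]
  refine h3.trans ?_
  rw [h2, ← Real.sqrt_mul (by positivity)]
  refine Real.le_sqrt_of_sq_le ?_
  nlinarith [sq_nonneg (C * b - σ * a)]

lemma kap2_int {k : ℕ} {σ C : ℝ} (hC : 0 ≤ C) {xt : Fin n → ℝ} (hxt : kSparseNonneg n k xt) :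
    ∫ x, kap2 k σ C xt x ∂(gam (Fin n ⊕ Unit)) = ∫ x, kap k C xt x ∂(gam (Fin n)) := by
  have p1 := (measurePreserving_fst (μ := gam (Fin n)) (ν := gam Unit)).comp (gam_sum _ _)
  have hl := kap_lip hC hxt
  have hz : ∫ x : Fin n ⊕ Unit → ℝ, x (Sum.inr ()) ∂(gam _) = 0 := by
    have := stein (I := Fin n ⊕ Unit) (φ := fun _ => 1) (φ' := fun _ => 0) (Pi.single (Sum.inr ()) 1)
      (fun x => by unfold HasLineDerivAt; exact hasDerivAt_const _ _) (integrable_const _) (integrable_const _)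
      (by simpa only [one_mul] using gam_int_dot _)
    simpa using this
  have hzi : Integrable (fun x : Fin n ⊕ Unit → ℝ => x (Sum.inr ())) (gam _) := by
    simpa using gam_int_dot (I := Fin n ⊕ Unit) (Pi.single (Sum.inr ()) 1)
  have hi : Integrable (fun x : Fin n ⊕ Unit → ℝ => kap k C xt (fun j => x (Sum.inl j))) (gam _) :=
    (p1.integrable_comp hl.cont.aestronglyMeasurable).2 hl.int
  unfold kap2
  rw [integral_sub hi (hzi.const_mul σ), integral_const_mul, hz, mul_zero, sub_zero]
  rw [← p1.map_eq, integral_map p1.measurable.aemeasurable hl.cont.aestronglyMeasurable]; rfl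

lemma xi_int {k : ℕ} {σ C : ℝ} (hC : 0 ≤ C) {xt : Fin n → ℝ} (hxt : kSparseNonneg n k xt) :
    ∫ p, xiUpFun m n k σ C xt p ∂(muGH m n)
      = (∫ x, kap k C xt x ∂(gam (Fin n))) + Real.sqrt (C ^ 2 + σ ^ 2) * ∫ x, nrm x ∂(gam (Fin m)) := by
  have hl := kap_lip hC hxt
  have hmu : muGH m n = (gam (Fin m)).prod (gam (Fin n)) := rfl
  simp only [xi_eq hC hxt, hmu]
  have i1 : Integrable (fun p : (Fin m → ℝ) × (Fin n → ℝ) => Real.sqrt (C ^ 2 + σ ^ 2) * nrm p.1)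
    ((gam (Fin m)).prod (gam (Fin n))) := (gam_int_nrm.comp_fst _).const_mul _
  have i2 : Integrable (fun p : (Fin m → ℝ) × (Fin n → ℝ) => kap k C xt p.2)
    ((gam (Fin m)).prod (gam (Fin n))) := hl.int.comp_snd _
  rw [integral_add i1 i2, integral_const_mul, integral_fun_fst, integral_fun_snd (kap k C xt)]
  simp [add_comm]

noncomputable def psi (σ : ℝ) (ω : (Fin m → Fin n → ℝ) × (Fin m → ℝ)) : Fin m × (Fin n ⊕ Unit) → ℝ :=
  fun p => Sum.elim (fun j => ω.1 p.1 j) (fun _ => ω.2 p.1 / σ) p.2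

lemma psi_meas (σ : ℝ) : Measurable (psi σ : (Fin m → Fin n → ℝ) × (Fin m → ℝ) → _) := by
  refine measurable_pi_iff.2 ?_
  rintro ⟨i, j | j⟩
  · simp only [psi, Sum.elim_inl]; fun_prop
  · simp only [psi, Sum.elim_inr]; fun_prop

lemma psi_map {σ : ℝ} (hσ : 0 < σ) : (muAv m n σ).map (psi σ) = gam (Fin m × (Fin n ⊕ Unit)) := by
  unfold gam
  symm
  refine Measure.pi_eq fun s hs => ?_
  rw [Measure.map_apply (psi_meas σ) (MeasurableSet.univ_pi hs)]
  have e : psi σ ⁻¹' (Set.univ.pi s) = (Set.univ.pi fun i : Fin m => Set.univ.pi fun j : Fin n => s (i, Sum.inl j))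
      ×ˢ (Set.univ.pi fun i : Fin m => (fun x => x / σ) ⁻¹' s (i, Sum.inr ())) := by
    ext ω
    simp only [Set.mem_preimage, Set.mem_pi, Set.mem_prod, Set.mem_univ, true_imp_iff]
    constructor
    · intro H
      exact ⟨fun i j => H (i, Sum.inl j), fun i => H (i, Sum.inr ())⟩
    · rintro ⟨h1, h2⟩ ⟨i, j | j⟩
      · exact h1 i j
      · exact h2 i
  rw [e, muAv, Measure.prod_prod, Measure.pi_pi, Measure.pi_pi, Fintype.prod_prod_type, ← Finset.prod_mul_distrib]
  refine Finset.prod_congr rfl fun i _ => ?_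
  rw [Measure.pi_pi, Fintype.prod_sum_type, Fintype.prod_unique (fun x : Unit => _),
    ← Measure.map_apply (by fun_prop) (hs _), gaussianReal_map_div_const]
  congr 3
  · simp
  · ext; simp only [NNReal.coe_div, Real.coe_toNNReal', NNReal.coe_mk, NNReal.coe_one]
    rw [max_eq_left (by positivity), div_self (by positivity)]

end


noncomputable def vv {m n : ℕ} (k : ℕ) (σ C : ℝ) (xt : Fin n → ℝ) (u : Fin m → ℝ)
    (ω : Fin m × (Fin n ⊕ Unit) → ℝ) : ℝ :=
  kap2 k σ C xt (fun j => ∑ i, u i * ω (i, j))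

lemma bad_bound {m n k : ℕ} {xt : Fin n → ℝ} (hxt : kSparseNonneg n k xt)
    {σ C : ℝ} (hσ : 0 < σ) (hC : 0 < C) (e : ℕ → Fin m → ℝ) (he : ∀ i, nrm (e i) = 1)
    {E t r : ℝ} (hE : E = ∫ p, xiUpFun m n k σ C xt p ∂(muGH m n)) (hr : 0 ≤ r) (ht : E + r ≤ t) :
    gam (Fin m × (Fin n ⊕ Unit)) (⋃ N : ℕ, {ω | ∃ i : Fin (N + 1), t < vv k σ C xt (e i) ω})
      ≤ ENNReal.ofReal (Real.exp (-r ^ 2 / (2 * (C ^ 2 + σ ^ 2)))) := by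
  have hL0 : 0 < Real.sqrt (C ^ 2 + σ ^ 2) := by positivity
  have hL := kap2_lip hσ.le hC.le hxt
  have hmono : Monotone (fun N : ℕ => {ω : Fin m × (Fin n ⊕ Unit) → ℝ |
      ∃ i : Fin (N + 1), t < vv k σ C xt (e i) ω}) := by
    rintro a b hab ω ⟨i, hi⟩
    exact ⟨⟨i, by omega⟩, hi⟩
  rw [hmono.measure_iUnion]
  refine iSup_le fun N => ?_
  have hc := chevet hL0.le hL (fun i : Fin (N + 1) => e i) (fun i => he i)
  rw [kap2_int hC.le hxt, ← xi_int hC.le hxt, ← hE] at hc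
  have hF := F_lip hL0.le hL (fun i : Fin (N + 1) => e i) (fun i => he i)
  have := conc hL0 hF r hr
  rw [Real.sq_sqrt (by positivity)] at this
  refine (measure_mono ?_).trans this
  rintro ω ⟨i, hi⟩
  have h1 := le_mx (fun i : Fin (N + 1) => kap2 k σ C xt (fun j => ∑ i', e i i' * ω (i', j))) i
  have h2 : vv k σ C xt (e i) ω = kap2 k σ C xt (fun j => ∑ i', e i i' * ω (i', j)) := rfl
  rw [Set.mem_setOf_eq]
  linarith

lemma vv_cont {m n k : ℕ} {xt : Fin n → ℝ} (hxt : kSparseNonneg n k xt)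
    {σ C : ℝ} (hσ : 0 < σ) (hC : 0 < C) (ω : Fin m × (Fin n ⊕ Unit) → ℝ) :
    Continuous fun u : Fin m → ℝ => vv k σ C xt u ω :=
  (kap2_lip hσ.le hC.le hxt).cont.comp (by fun_prop)

lemma vv_cont' {m n k : ℕ} {xt : Fin n → ℝ} (hxt : kSparseNonneg n k xt)
    {σ C : ℝ} (hσ : 0 < σ) (hC : 0 < C) (u : Fin m → ℝ) :
    Continuous fun ω : Fin m × (Fin n ⊕ Unit) → ℝ => vv k σ C xt u ω :=
  (kap2_lip hσ.le hC.le hxt).cont.comp (by fun_prop)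

lemma vv_psi {m n k : ℕ} {xt : Fin n → ℝ} {σ C : ℝ} (hσ : 0 < σ) (u : Fin m → ℝ)
    (ω : (Fin m → Fin n → ℝ) × (Fin m → ℝ)) :
    vv k σ C xt u (psi σ ω) = kap k C xt (fun j => ∑ i, u i * ω.1 i j) - u ⬝ᵥ ω.2 := by
  simp only [vv, kap2, psi, Sum.elim_inl, Sum.elim_inr, dotProduct]
  congr 1
  rw [Finset.mul_sum]
  refine Finset.sum_congr rfl fun i _ => ?_
  field_simp

theorem lasso_stmt14 (m n k : ℕ) (hm : 1 ≤ m) (hn : 1 ≤ n) (hk1 : 1 ≤ k) (hkn : k ≤ n)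
    (xt : Fin n → ℝ) (hxt : kSparseNonneg n k xt)
    (σ C : ℝ) (hσ : 0 < σ) (hC : 0 < C)
    (hEξ : 0 ≤ ∫ p, xiUpFun m n k σ C xt p ∂(muGH m n)) :
    ∀ ε₁ ∈ Set.Ioo (0 : ℝ) 1, ∀ ε₂ ∈ Set.Ioo (0 : ℝ) 1, ∀ ε₃ ∈ Set.Ioo (0 : ℝ) 1,
      muAv m n σ
        {ω | zetaObj m n xt ω
          ≤ (1 + ε₁) * (∫ p, xiUpFun m n k σ C xt p ∂(muGH m n))
            + (ε₂ + ε₃) * Real.sqrt n}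
      ≥ ENNReal.ofReal
          (1 - 2 * Real.exp (-(ε₁ * ∫ p, xiUpFun m n k σ C xt p ∂(muGH m n)) ^ 2
                / (2 * (2 * C ^ 2 + σ ^ 2)))
            - Real.exp (-(ε₂ ^ 2 * n) / (2 * σ ^ 2))
            - Real.exp (-(ε₃ ^ 2 * n) / 2)) := by
  intro ε₁ h₁ ε₂ h₂ ε₃ h₃
  generalize hE : ∫ p, xiUpFun m n k σ C xt p ∂(muGH m n) = E at *
  set t := (1 + ε₁) * E + (ε₂ + ε₃) * Real.sqrt n with ht
  have hr : 0 ≤ ε₁ * E := mul_nonneg h₁.1.le hEξ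
  have hs : 0 ≤ (ε₂ + ε₃) * Real.sqrt n := mul_nonneg (add_nonneg h₂.1.le h₃.1.le) (Real.sqrt_nonneg _)
  have htE : E + ε₁ * E ≤ t := by rw [ht]; linarith
  have ht0 : 0 ≤ t := by linarith
  haveI : Nonempty {u : Fin m → ℝ // nrm u = 1} :=
    ⟨⟨Pi.single ⟨0, hm⟩ 1, by simp [nrm, Pi.single_apply]⟩⟩
  set e : ℕ → {u : Fin m → ℝ // nrm u = 1} := TopologicalSpace.denseSeq _ with he
  have hb := bad_bound hxt hσ hC (fun i => (e i : Fin m → ℝ)) (fun i => (e i).2) hE.symm hr htE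
  set B := ⋃ N : ℕ, {ω | ∃ i : Fin (N + 1), t < vv k σ C xt (e i : Fin m → ℝ) ω} with hB
  have hBm : MeasurableSet B := by
    refine MeasurableSet.iUnion fun N => ?_
    have : {ω | ∃ i : Fin (N + 1), t < vv k σ C xt (e i : Fin m → ℝ) ω}
        = ⋃ i : Fin (N + 1), {ω | t < vv k σ C xt (e i : Fin m → ℝ) ω} := by ext; simp
    rw [this]
    exact MeasurableSet.iUnion fun i =>
      (isOpen_lt continuous_const (vv_cont' hxt hσ hC _)).measurableSet
  have hsub : (psi σ ⁻¹' B)ᶜ ⊆ {ω | zetaObj m n xt ω ≤ t} := by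
    intro ω hω
    by_contra hz
    rw [Set.mem_setOf_eq, not_le] at hz
    obtain ⟨u, hu, hlt⟩ := dual hC.le hxt ht0 hz
    rw [← vv_psi hσ] at hlt
    have ho : IsOpen {u : {u : Fin m → ℝ // nrm u = 1} | t < vv k σ C xt u (psi σ ω)} :=
      isOpen_lt continuous_const ((vv_cont hxt hσ hC _).comp continuous_subtype_val)
    obtain ⟨i, hi⟩ := (TopologicalSpace.denseRange_denseSeq {u : Fin m → ℝ // nrm u = 1}).exists_mem_open
      ho ⟨⟨u, hu⟩, hlt⟩
    exact hω (Set.mem_iUnion.2 ⟨i, ⟨⟨i, by omega⟩, hi⟩⟩)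
  haveI : IsProbabilityMeasure (muAv m n σ) := by unfold muAv; infer_instance
  refine ge_iff_le.2 (le_trans ?_ (measure_mono hsub))
  rw [prob_compl_eq_one_sub (psi_meas σ hBm), ← Measure.map_apply (psi_meas σ) hBm, psi_map hσ]
  refine le_trans ?_ (tsub_le_tsub_left hb 1)
  rw [← ENNReal.ofReal_one, ← ENNReal.ofReal_sub _ (Real.exp_pos _).le]
  refine ENNReal.ofReal_le_ofReal ?_
  have hx : Real.exp (-(ε₁ * E) ^ 2 / (2 * (C ^ 2 + σ ^ 2)))
      ≤ Real.exp (-(ε₁ * E) ^ 2 / (2 * (2 * C ^ 2 + σ ^ 2))) := by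
    refine Real.exp_le_exp.2 ?_
    rw [neg_div, neg_div, neg_le_neg_iff]
    gcongr
    nlinarith [sq_nonneg C]
  have := Real.exp_pos (-(ε₁ * E) ^ 2 / (2 * (2 * C ^ 2 + σ ^ 2)))
  have := Real.exp_pos (-(ε₂ ^ 2 * n) / (2 * σ ^ 2))
  have := Real.exp_pos (-(ε₃ ^ 2 * n) / 2)
  linarith
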